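/- arXiv:1504.02414 — 4 statements merged into one kernel-verified Lean document; each statement's English description precedes it below -/
import Mathlib

section
/- If G is a bipartite 2-connected simple graph, then pc(G) = 2, and moreover there exists a proper-path 2-coloring of G having the strong property. -/
open SimpleGraph

/-- An edge-coloring `c` with `k` colors is a proper-path coloring of `G` if every pair of
distinct vertices is joined by a path on which no two consecutive edges share a color. -/
def IsProperPathColoring {V : Type*} (G : SimpleGraph V) {k : ℕ}
    (c : Sym2 V → Fin k) : Prop :=
  ∀ u v : V, u ≠ v → ∃ p : G.Walk u v, p.IsPath ∧ (p.edges.map c).Chain' (· ≠ ·)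

/-- The proper connection number of `G`: the least number of colors in a
proper-path coloring of `G`. -/
noncomputable def pc {V : Type*} (G : SimpleGraph V) : ℕ :=
  sInf {k : ℕ | ∃ c : Sym2 V → Fin k, IsProperPathColoring G c}

/-- The strong property: any two distinct vertices are joined by two proper paths whose
first edge colors differ and whose last edge colors differ. -/
def HasStrongProperty {V : Type*} (G : SimpleGraph V) {k : ℕ}
    (c : Sym2 V → Fin k) : Prop :=
  ∀ u v : V, u ≠ v → ∃ p q : G.Walk u v,
    p.IsPath ∧ (p.edges.map c).Chain' (· ≠ ·) ∧
    q.IsPath ∧ (q.edges.map c).Chain' (· ≠ ·) ∧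
    (p.edges.map c).head? ≠ (q.edges.map c).head? ∧
    (p.edges.map c).getLast? ≠ (q.edges.map c).getLast?

/-- A graph is 2-connected if it has at least 3 vertices and removing any single
vertex leaves it connected. -/
def TwoConnected {V : Type*} (G : SimpleGraph V) : Prop :=
  3 ≤ Nat.card V ∧ ∀ v : V, (G.induce ({v}ᶜ : Set V)).Connected

theorem dirWalk_props {V : Type*} (G : SimpleGraph V) (D : V → V → Prop)
    (col : V → Fin 2) (hcol : ∀ a b, G.Adj a b → col a ≠ col b)
    (c : Sym2 V → Fin 2) (hc : ∀ a b, D a b → c s(a, b) = col a) :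
    ∀ {u v : V} (p : G.Walk u v), (∀ d ∈ p.darts, D d.fst d.snd) →
      (p.edges.map c).IsChain (· ≠ ·) ∧ (∀ x ∈ (p.edges.map c).head?, x = col u) ∧
      (∀ x ∈ (p.edges.map c).getLast?, x ≠ col v) := by
  intro u v p
  induction p with
  | nil => intro _; simp
  | @cons u w v h p ih =>
    intro hd
    have h1 : D u w := hd ⟨(u, w), h⟩ (by simp)
    obtain ⟨i1, i2, i3⟩ := ih (fun d hd' => hd d (by simp [hd']))
    have hne := hcol _ _ h
    refine ⟨?_, ?_, ?_⟩
    · simp only [Walk.edges_cons, List.map_cons, List.isChain_cons]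
      refine ⟨?_, i1⟩
      intro y hy
      rw [i2 y hy, hc _ _ h1]
      exact hne
    · simp [hc _ _ h1]
    · cases p with
      | nil => simp [hc _ _ h1, hne]
      | cons h' p' =>
        intro x hx
        apply i3 x
        simpa [Walk.edges_cons, List.map_cons, List.getLast?_cons_cons] using hx

theorem exists_dirPath {V : Type*} (G : SimpleGraph V) (D : V → V → Prop)
    (hD : ∀ a b, D a b → G.Adj a b) {u v : V} (h : Relation.ReflTransGen D u v) :
    ∃ p : G.Walk u v, p.IsPath ∧ ∀ d ∈ p.darts, D d.fst d.snd := by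
  classical
  have : ∃ p : G.Walk u v, ∀ d ∈ p.darts, D d.fst d.snd := by
    induction h using Relation.ReflTransGen.head_induction_on with
    | refl => exact ⟨Walk.nil, by simp⟩
    | head h1 _ ih =>
      obtain ⟨p, hp⟩ := ih
      refine ⟨Walk.cons (hD _ _ h1) p, ?_⟩
      intro d hd
      simp only [Walk.darts_cons, List.mem_cons] at hd
      rcases hd with rfl | hd
      · exact h1
      · exact hp d hd
  obtain ⟨p, hp⟩ := this
  exact ⟨p.bypass, p.bypass_isPath, fun d hd => hp d (p.darts_bypass_subset_darts hd)⟩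

theorem twoConn_bridgeless {V : Type*} [Fintype V] (G : SimpleGraph V)
    (h2 : TwoConnected G) {s x : V} (h : G.Adj s x) :
    (G.deleteEdges {s(s, x)}).Reachable x s := by
  classical
  obtain ⟨h3, hc⟩ := h2
  -- a third vertex
  have h3' : 3 ≤ Fintype.card V := by rwa [Nat.card_eq_fintype_card] at h3
  have : ∃ z, z ≠ s ∧ z ≠ x := by
    by_contra! hcon
    have : (Finset.univ : Finset V) ⊆ {s, x} := by
      intro z _
      by_cases hz : z = s
      · simp [hz]
      · simp [hcon z hz]
    have := Finset.card_le_card this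
    have := Finset.card_le_two (a := s) (b := x)
    simp only [Finset.card_univ] at *
    omega
  obtain ⟨z, hzs, hzx⟩ := this
  have key : ∀ w : V, w ∈ s(s, x) → ∀ a b : ({w}ᶜ : Set V),
      (G.deleteEdges {s(s, x)}).Reachable a.1 b.1 := by
    intro w hw a b
    let f : G.induce ({w}ᶜ : Set V) →g G.deleteEdges {s(s, x)} :=
      { toFun := Subtype.val
        map_rel' := by
          intro a b hab
          rw [deleteEdges_adj]
          refine ⟨hab, ?_⟩
          intro he
          rw [Set.mem_singleton_iff] at he
          rw [← he, Sym2.mem_iff] at hw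
          rcases hw with hw | hw
          · exact a.2 hw.symm
          · exact b.2 hw.symm }
    exact ((hc w).preconnected a b).map f
  have e1 := key s (by simp) ⟨x, by simpa using h.ne'⟩ ⟨z, by simpa using hzs⟩
  have e2 := key x (by simp) ⟨z, by simpa using hzx⟩ ⟨s, by simpa using h.ne⟩
  exact e1.trans e2

/-- A strongly connected partial orientation supported on `S`. -/
def StrongOn {V : Type*} (G : SimpleGraph V) (S : Finset V) : Prop :=
  ∃ D : V → V → Prop, (∀ a b, D a b → G.Adj a b ∧ a ∈ S ∧ b ∈ S) ∧ (∀ a b, D a b → ¬ D b a) ∧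
    ∀ a ∈ S, ∀ b ∈ S, Relation.ReflTransGen D a b

theorem exists_ear {V : Type*} (G : SimpleGraph V)
    (hb : ∀ s x, G.Adj s x → (G.deleteEdges {s(s, x)}).Reachable x s)
    (S : Finset V) {s x : V} (hs : s ∈ S) (hx : x ∉ S) (h : G.Adj s x) :
    ∃ (n : ℕ) (f : ℕ → V), 2 ≤ n ∧ f 0 = s ∧ f n ∈ S ∧ (∀ i < n, G.Adj (f i) (f (i + 1))) ∧
      (∀ i, 0 < i → i < n → f i ∉ S) ∧
      (∀ i j, 0 < i → i < n → 0 < j → j < n → f i = f j → i = j) ∧ (n = 2 → f 2 ≠ f 0) := by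
  classical
  have hex : ∃ n, ∃ t ∈ S, ∃ p : (G.deleteEdges {s(s, x)}).Walk x t, p.length = n := by
    obtain ⟨p⟩ := hb s x h
    exact ⟨_, s, hs, p, rfl⟩
  obtain ⟨t, ht, p, hp⟩ := Nat.find_spec hex
  have hmin : ∀ t' ∈ S, ∀ p' : (G.deleteEdges {s(s, x)}).Walk x t', p.length ≤ p'.length := by
    intro t' ht' p'
    rw [hp]
    exact Nat.find_min' hex ⟨t', ht', p', rfl⟩
  have hpath : p.IsPath := by
    have h1 : p.bypass.length = p.length :=
      le_antisymm p.length_bypass_le_length (hmin t ht p.bypass)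
    have := p.bypass_isPath
    rwa [Walk.bypass_eq_self_of_length_le_length_bypass p (h1 ▸ le_rfl)] at this
  have hadj : ∀ i < p.length, (G.deleteEdges {s(s, x)}).Adj (p.getVert i) (p.getVert (i + 1)) :=
    fun i hi => p.adj_getVert_succ hi
  have hout : ∀ i < p.length, p.getVert i ∉ S := by
    intro i hi hS
    have := hmin _ hS (p.take i)
    rw [Walk.take_length] at this
    omega
  have hlen : 0 < p.length := by
    rcases Nat.eq_zero_or_pos p.length with h0 | h0
    · exact absurd (Walk.eq_of_length_eq_zero h0 ▸ ht) hx
    · exact h0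
  refine ⟨p.length + 1, fun i => if i = 0 then s else p.getVert (i - 1), by omega, by simp,
    by simpa using ht, ?_, ?_, ?_, ?_⟩
  · intro i hi
    rcases i with _ | i
    · simpa using h
    · simpa using (deleteEdges_adj.1 (hadj i (by omega))).1
  · intro i h0 hi
    rcases i with _ | i
    · omega
    · simpa using hout i (by omega)
  · intro i j hi0 hi hj0 hj hij
    have := hpath.getVert_injOn (x₁ := i - 1) (x₂ := j - 1) (by simp; omega) (by simp; omega)
      (by simpa [hi0.ne', hj0.ne'] using hij)
    omega
  · intro hn hst
    have h1 : p.length = 1 := by omega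
    have := hadj 0 (by omega)
    simp at hst
    rw [zero_add, hst, Walk.getVert_zero, deleteEdges_adj] at this
    exact this.2 (by simp [Sym2.eq_swap])

theorem strongOn_step {V : Type*} (G : SimpleGraph V)
    (hb : ∀ s x, G.Adj s x → (G.deleteEdges {s(s, x)}).Reachable x s)
    (S : Finset V) (hS : StrongOn G S) {s x : V} (hs : s ∈ S) (hx : x ∉ S) (h : G.Adj s x) :
    ∃ T : Finset V, S.card < T.card ∧ S ⊆ T ∧ StrongOn G T := by
  classical
  obtain ⟨n, f, hn, f0, fn, fadj, fout, finj, f2⟩ := exists_ear G hb S hs hx h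
  obtain ⟨D, hD, hasym, hreach⟩ := hS
  have hST : S ⊆ S ∪ (Finset.range (n + 1)).image f := Finset.subset_union_left
  have hfT : ∀ i ≤ n, f i ∈ S ∪ (Finset.range (n + 1)).image f := fun i hi =>
    Finset.mem_union_right _ (Finset.mem_image_of_mem f (by simp; omega))
  refine ⟨S ∪ (Finset.range (n + 1)).image f, ?_, hST, ?_⟩
  · apply Finset.card_lt_card
    refine ⟨hST, fun hh => ?_⟩
    exact fout 1 (by omega) (by omega) (hh (hfT 1 (by omega)))
  let D' : V → V → Prop := fun a b => D a b ∨ ∃ i < n, a = f i ∧ b = f (i + 1)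
  have hinS : ∀ i ≤ n, f i ∈ S → i = 0 ∨ i = n := by
    intro i hi hfi
    by_contra! hc
    exact fout i (by omega) (by omega) hfi
  have hnoD : ∀ i < n, f i ∈ S → f (i + 1) ∈ S → False := by
    intro i hi h1 h2
    have := hinS i (by omega) h1
    have := hinS (i + 1) (by omega) h2
    omega
  have f0S : f 0 ∈ S := f0 ▸ hs
  have hear : ∀ i j, i < n → j < n → i ≤ j → f i = f (j + 1) → f j = f (i + 1) → False := by
    intro i j hi hj hij h1 h2
    rcases Nat.eq_zero_or_pos i with rfl | hi0
    · have hj1 := hinS (j + 1) (by omega) (h1 ▸ f0S)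
      have hj0 : 0 < j := by omega
      have := finj j 1 hj0 hj (by omega) (by omega) (by simpa using h2)
      subst this
      exact f2 (by omega) h1.symm
    · rcases eq_or_ne (j + 1) n with hjn | hjn
      · exact fout i hi0 hi (by rw [h1, hjn]; exact fn)
      · have := finj i (j + 1) hi0 hi (by omega) (by omega) h1
        omega
  refine ⟨D', ?_, ?_, ?_⟩
  · rintro a b (hab | ⟨i, hi, rfl, rfl⟩)
    · obtain ⟨h1, h2, h3⟩ := hD a b hab
      exact ⟨h1, hST h2, hST h3⟩
    · exact ⟨fadj i hi, hfT _ (by omega), hfT _ (by omega)⟩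
  · rintro a b (hab | ⟨i, hi, rfl, rfl⟩) (hba | ⟨j, hj, h1, h2⟩)
    · exact hasym a b hab hba
    · obtain ⟨-, h3, h4⟩ := hD a b hab
      exact hnoD j hj (h1 ▸ h4) (h2 ▸ h3)
    · obtain ⟨-, h3, h4⟩ := hD _ _ hba
      exact hnoD i hi h4 h3
    · rcases le_total i j with hij | hij
      · exact hear i j hi hj hij h2 h1.symm
      · exact hear j i hj hi hij h1.symm h2
  · have hlift : ∀ a ∈ S, ∀ b ∈ S, Relation.ReflTransGen D' a b := fun a ha b hb' =>
      Relation.ReflTransGen.mono (r := D) (fun _ _ hab => Or.inl hab) _ _ (hreach a ha b hb')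
    have hfwd : ∀ i j, i ≤ j → j ≤ n → Relation.ReflTransGen D' (f i) (f j) := by
      intro i j hij
      induction j, hij using Nat.le_induction with
      | base => intro _; exact .refl
      | succ j hij ih =>
        intro hj
        exact (ih (by omega)).tail (Or.inr ⟨j, by omega, rfl, rfl⟩)
    have hto : ∀ a ∈ S ∪ (Finset.range (n + 1)).image f, Relation.ReflTransGen D' a s := by
      intro a ha
      rcases Finset.mem_union.1 ha with ha | ha
      · exact hlift a ha s hs
      · obtain ⟨i, hi, rfl⟩ := Finset.mem_image.1 ha
        simp at hi
        exact (hfwd i n (by omega) le_rfl).trans (hlift _ fn s hs)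
    have hfrom : ∀ a ∈ S ∪ (Finset.range (n + 1)).image f, Relation.ReflTransGen D' s a := by
      intro a ha
      rcases Finset.mem_union.1 ha with ha | ha
      · exact hlift s hs a ha
      · obtain ⟨i, hi, rfl⟩ := Finset.mem_image.1 ha
        simp at hi
        rw [← f0]
        exact hfwd 0 i (by omega) (by omega)
    exact fun a ha b hb' => (hto a ha).trans (hfrom b hb')

theorem strongOn_univ {V : Type*} [Fintype V] [Nonempty V] (G : SimpleGraph V)
    (hconn : G.Preconnected)
    (hb : ∀ s x, G.Adj s x → (G.deleteEdges {s(s, x)}).Reachable x s) :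
    StrongOn G Finset.univ := by
  classical
  obtain ⟨r⟩ := ‹Nonempty V›
  have hne : ((Finset.univ : Finset (Finset V)).filter
      (fun S => r ∈ S ∧ StrongOn G S)).Nonempty := by
    refine ⟨{r}, ?_⟩
    simp only [Finset.mem_filter, Finset.mem_univ, true_and, Finset.mem_singleton]
    refine ⟨fun _ _ => False, by simp, by simp, ?_⟩
    intro a ha b hb'
    rw [Finset.mem_singleton] at ha hb'
    subst ha
    subst hb'
    exact .refl
  obtain ⟨S, hS, hmax⟩ := Finset.exists_max_image _ Finset.card hne
  simp only [Finset.mem_filter, Finset.mem_univ, true_and] at hS hmax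
  have hstr := hS.2
  obtain ⟨D, hD, hasym, hreach⟩ := hS.2
  by_cases hU : S = Finset.univ
  · exact hU ▸ hstr
  exfalso
  obtain ⟨z, hz⟩ : ∃ z, z ∉ S := by
    by_contra! hc
    exact hU (Finset.eq_univ_iff_forall.2 hc)
  obtain ⟨p⟩ := hconn r z
  obtain ⟨d, -, hd1, hd2⟩ := p.exists_boundary_dart (S : Set V) (by simpa using hS.1) (by simpa using hz)
  obtain ⟨T, hT1, hT2, hT3⟩ :=
    strongOn_step G hb S hstr (by simpa using hd1) (by simpa using hd2) d.adj
  exact absurd (hmax T ⟨hT2 hS.1, hT3⟩) (by omega)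

/-- If `G` is bipartite and 2-connected, then `pc G = 2` and there is a proper-path
2-coloring of `G` with the strong property. -/
theorem pc_bipartite_twoConnected {V : Type*} [Fintype V] (G : SimpleGraph V)
    (hbip : G.Colorable 2) (h2 : TwoConnected G) :
    pc G = 2 ∧ ∃ c : Sym2 V → Fin 2, IsProperPathColoring G c ∧ HasStrongProperty G c := by
  classical
  obtain ⟨C⟩ := hbip
  have hcol : ∀ a b, G.Adj a b → C a ≠ C b := fun a b h => C.valid h
  have h3 : 3 ≤ Fintype.card V := by
    have := h2.1
    rwa [Nat.card_eq_fintype_card] at this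
  have hNE : Nonempty V := Fintype.card_pos_iff.1 (by omega)
  have hconn : G.Preconnected := by
    intro u v
    obtain ⟨w, -, hw⟩ : ∃ w ∈ (Finset.univ : Finset V), w ∉ ({u, v} : Finset V) := by
      apply Finset.exists_mem_notMem_of_card_lt_card
      have := Finset.card_le_two (a := u) (b := v)
      rw [Finset.card_univ]
      omega
    simp only [Finset.mem_insert, Finset.mem_singleton, not_or] at hw
    exact ((h2.2 w).preconnected ⟨u, by simpa using Ne.symm hw.1⟩
      ⟨v, by simpa using Ne.symm hw.2⟩).map (Embedding.induce _).toHom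
  obtain ⟨D, hD, hasym, hreach⟩ :=
    strongOn_univ G hconn (fun s x h => twoConn_bridgeless G h2 h)
  let c : Sym2 V → Fin 2 := fun e => if ∃ a b, e = s(a, b) ∧ D a b ∧ C a = 0 then 0 else 1
  have hc : ∀ a b, D a b → c s(a, b) = C a := by
    intro a b hab
    by_cases h0 : C a = 0
    · have : ∃ a' b', s(a, b) = s(a', b') ∧ D a' b' ∧ C a' = 0 := ⟨a, b, rfl, hab, h0⟩
      simp only [c, if_pos this, h0]
    · have : ¬ ∃ a' b', s(a, b) = s(a', b') ∧ D a' b' ∧ C a' = 0 := by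
        rintro ⟨a', b', he, hd, h0'⟩
        rcases Sym2.eq_iff.1 he with ⟨rfl, rfl⟩ | ⟨rfl, rfl⟩
        · exact h0 h0'
        · exact hasym _ _ hab hd
      simp only [c, if_neg this]
      omega
  have hstrong : HasStrongProperty G c := by
    intro u v huv
    obtain ⟨p, hp, hpd⟩ := exists_dirPath G D (fun a b h => (hD a b h).1)
      (hreach u (by simp) v (by simp))
    obtain ⟨q, hq, hqd⟩ := exists_dirPath G D (fun a b h => (hD a b h).1)
      (hreach v (by simp) u (by simp))
    obtain ⟨p1, p2, p3⟩ := dirWalk_props G D C hcol c hc p hpd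
    obtain ⟨q1, q2, q3⟩ := dirWalk_props G D C hcol c hc q hqd
    have hpne : p.edges.map c ≠ [] := by
      cases p with
      | nil => exact absurd rfl huv
      | cons h p => simp
    have hqne : q.edges.map c ≠ [] := by
      cases q with
      | nil => exact absurd rfl huv
      | cons h p => simp
    refine ⟨p, q.reverse, hp, p1, hq.reverse, ?_, ?_, ?_⟩
    · rw [Walk.edges_reverse, List.map_reverse]
      refine List.isChain_reverse.2 (q1.imp ?_)
      intro a b hab
      exact hab.symm
    · rw [Walk.edges_reverse, List.map_reverse, List.head?_reverse,
        List.head?_eq_some_head hpne, List.getLast?_eq_some_getLast hqne]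
      have e1 := p2 _ (List.head?_eq_some_head hpne)
      have e2 := q3 _ (List.getLast?_eq_some_getLast hqne)
      rw [e1]
      intro he
      exact e2 (Option.some.inj he).symm
    · rw [Walk.edges_reverse, List.map_reverse, List.getLast?_reverse,
        List.head?_eq_some_head hqne, List.getLast?_eq_some_getLast hpne]
      have e1 := q2 _ (List.head?_eq_some_head hqne)
      have e2 := p3 _ (List.getLast?_eq_some_getLast hpne)
      rw [e1]
      intro he
      exact e2 (Option.some.inj he)
  have hproper : IsProperPathColoring G c := by
    intro u v huv
    obtain ⟨p, -, h1, h2, -⟩ := hstrong u v huv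
    exact ⟨p, h1, h2⟩
  refine ⟨le_antisymm (Nat.sInf_le ⟨c, hproper⟩) ?_, c, hproper, hstrong⟩
  refine le_csInf ⟨2, c, hproper⟩ ?_
  rintro k ⟨c', hc'⟩
  by_contra hk
  obtain ⟨u⟩ := hNE
  have hk1 : k = 1 := by
    have := (c' s(u, u)).isLt
    omega
  subst hk1
  have hall : ∀ a b, a ≠ b → G.Adj a b := by
    intro a b hab
    obtain ⟨p, -, hp⟩ := hc' a b hab
    cases p with
    | nil => exact absurd rfl hab
    | cons h p =>
      cases p with
      | nil => exact h
      | cons h' p' =>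
        simp only [Walk.edges_cons, List.map_cons] at hp
        exact absurd (Subsingleton.elim _ _) (List.isChain_cons_cons.1 hp).1
  have hinj : Function.Injective C := by
    intro a b hab
    by_contra hne
    exact hcol a b (hall a b hne) hab
  have := Fintype.card_le_of_injective C hinj
  simp at this
  omega
end

section
/- If G is a 2-connected simple graph, then pc(G) ≤ 3, and moreover there exists a proper-path 3-coloring of G having the strong property. -/
open SimpleGraph

namespace PCProof

variable {V : Type*} {G : SimpleGraph V} {c : Sym2 V → Fin 3}

/-- A proper path from `x` to `y` with support exactly `S`, first color `a`, last color `b`. -/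
def PP (G : SimpleGraph V) (c : Sym2 V → Fin 3) (S : Set V) (x y : V) (a b : Fin 3) : Prop :=
  ∃ p : G.Walk x y, p.IsPath ∧ (p.edges.map c).IsChain (· ≠ ·) ∧ {z | z ∈ p.support} = S ∧
    (p.edges.map c).head? = some a ∧ (p.edges.map c).getLast? = some b

theorem PP.symm {S : Set V} {x y : V} {a b : Fin 3} (h : PP G c S x y a b) :
    PP G c S y x b a := by
  obtain ⟨p, h1, h2, h3, h4, h5⟩ := h
  refine ⟨p.reverse, h1.reverse, ?_, ?_, ?_, ?_⟩
  · rw [Walk.edges_reverse, List.map_reverse, List.isChain_reverse]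
    exact h2.imp (fun a b h => h.symm)
  · simpa using h3
  · simpa using h5
  · simpa using h4

theorem PP.left_mem {S : Set V} {x y : V} {a b : Fin 3} (h : PP G c S x y a b) : x ∈ S := by
  obtain ⟨p, h1, h2, h3, h4, h5⟩ := h
  rw [← h3]; simp

theorem PP.right_mem {S : Set V} {x y : V} {a b : Fin 3} (h : PP G c S x y a b) : y ∈ S :=
  h.symm.left_mem

theorem PP.join {S T : Set V} {x w y : V} {a b b' d : Fin 3} (h : PP G c S x w a b)
    (h' : PP G c T w y b' d) (hb : b ≠ b') (hST : ∀ z, z ∈ S → z ∈ T → z = w) :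
    PP G c (S ∪ T) x y a d := by
  obtain ⟨p, h1, h2, h3, h4, h5⟩ := h
  obtain ⟨q, g1, g2, g3, g4, g5⟩ := h'
  refine ⟨p.append q, ?_, ?_, ?_, ?_, ?_⟩
  · rw [Walk.isPath_def, Walk.support_append]
    have gn := (Walk.isPath_def q).1 g1
    rw [Walk.support_eq_cons, List.nodup_cons] at gn
    refine List.Nodup.append ((Walk.isPath_def p).1 h1) gn.2 ?_
    intro z hz hz'
    have : z = w := hST z (by rw [← h3]; exact hz) (by rw [← g3]; exact List.mem_of_mem_tail hz')
    subst this
    exact gn.1 hz'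
  · rw [Walk.edges_append, List.map_append, List.isChain_append]
    refine ⟨h2, g2, ?_⟩
    rw [h5, g4]
    simpa using hb
  · ext z
    rw [← h3, ← g3]; simp
  · rw [Walk.edges_append, List.map_append, List.head?_append, h4]; rfl
  · rw [Walk.edges_append, List.map_append, List.getLast?_append, g5]; rfl

theorem exists_ends (l : List (Fin 3)) (hl : l ≠ []) :
    ∃ a b, l.head? = some a ∧ l.getLast? = some b :=
  ⟨_, _, List.head?_eq_some_head hl, List.getLast?_eq_some_getLast hl⟩

theorem edges_ne_nil {x y : V} (p : G.Walk x y) (h : x ≠ y) : p.edges.map c ≠ [] := by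
  cases p with
  | nil => exact absurd rfl h
  | cons h p => simp

/-- Splitting a concrete path. -/
theorem split_append {x w y : V} {a d : Fin 3} (p : G.Walk x w) (q : G.Walk w y)
    (h1 : (p.append q).IsPath) (h2 : ((p.append q).edges.map c).IsChain (· ≠ ·))
    (h4 : ((p.append q).edges.map c).head? = some a)
    (h5 : ((p.append q).edges.map c).getLast? = some d) (hx : x ≠ w) (hy : w ≠ y) :
    ∃ b b', b ≠ b' ∧ PP G c {z | z ∈ p.support} x w a b ∧ PP G c {z | z ∈ q.support} w y b' d ∧
      ∀ z, z ∈ p.support → z ∈ q.support → z = w := by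
  obtain ⟨a1, b, e1, e2⟩ := exists_ends (p.edges.map c) (edges_ne_nil p hx)
  obtain ⟨b', d1, e3, e4⟩ := exists_ends (q.edges.map c) (edges_ne_nil q hy)
  rw [Walk.edges_append, List.map_append] at h2 h4 h5
  rw [List.isChain_append] at h2
  rw [List.head?_append, e1] at h4
  rw [List.getLast?_append, e4] at h5
  refine ⟨b, b', ?_, ⟨p, h1.of_append_left, h2.1, rfl, ?_, e2⟩,
    ⟨q, h1.of_append_right, h2.2.1, rfl, e3, ?_⟩, ?_⟩
  · exact h2.2.2 b e2 b' e3
  · rw [e1]; exact h4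
  · rw [e4]; exact h5
  · intro z hz hz'
    have hn := (Walk.isPath_def _).1 h1
    rw [Walk.support_append, List.nodup_append'] at hn
    rw [Walk.support_eq_cons, List.mem_cons] at hz'
    rcases hz' with h | h
    · exact h
    · exact absurd h (hn.2.2 hz)

theorem PP.split {T : Set V} {u v x : V} {a d : Fin 3} (h : PP G c T u v a d) (hx : x ∈ T)
    (hu : u ≠ x) (hv : x ≠ v) : ∃ T1 T2 b b', b ≠ b' ∧ PP G c T1 u x a b ∧ PP G c T2 x v b' d ∧
      (∀ z, z ∈ T1 → z ∈ T2 → z = x) ∧ T1 ∪ T2 = T := by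
  classical
  obtain ⟨p, h1, h2, h3, h4, h5⟩ := h
  have hx' : x ∈ p.support := by rw [← h3] at hx; exact hx
  have hs := p.take_spec hx'
  rw [← hs] at h1 h2 h4 h5
  obtain ⟨b, b', hb, e1, e2, e3⟩ := split_append _ _ h1 h2 h4 h5 hu hv
  refine ⟨_, _, b, b', hb, e1, e2, e3, ?_⟩
  rw [← h3]
  ext z
  conv_rhs => rw [← hs]
  simp only [Set.mem_union, Set.mem_ofPred_eq, Walk.mem_support_append_iff]

/-- First hit of a set by a walk. -/
theorem walk_first_hit (Q : Set V) {y u : V} (p : G.Walk y u) (hu : u ∈ Q) :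
    ∃ w, ∃ p1 : G.Walk y w, ∃ p2 : G.Walk w u, w ∈ Q ∧ p = p1.append p2 ∧
      ∀ z, z ∈ p1.support → z ∈ Q → z = w := by
  induction p with
  | nil => exact ⟨_, Walk.nil, Walk.nil, hu, rfl, by simp⟩
  | @cons y x u h p ih =>
    by_cases hy : y ∈ Q
    · exact ⟨_, Walk.nil, Walk.cons h p, hy, rfl, by simp⟩
    · obtain ⟨w, p1, p2, hw, hp, hz⟩ := ih hu
      refine ⟨w, Walk.cons h p1, p2, hw, by simp [hp], ?_⟩
      intro z hz1 hz2
      rw [Walk.support_cons, List.mem_cons] at hz1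
      rcases hz1 with rfl | hz1
      · exact absurd hz2 hy
      · exact hz z hz1 hz2

theorem PP.first_hit {R Q : Set V} {y u : V} {d g : Fin 3} (h : PP G c R y u d g)
    (hy : y ∉ Q) (hu : u ∈ Q) : ∃ w ∈ Q, ∃ R' g', R' ⊆ R ∧ PP G c R' y w d g' ∧
      ∀ z, z ∈ R' → z ∈ Q → z = w := by
  obtain ⟨p, h1, h2, h3, h4, h5⟩ := h
  obtain ⟨w, p1, p2, hw, hp, hz⟩ := walk_first_hit Q p hu
  by_cases hwu : w = u
  · subst hwu
    refine ⟨w, hw, R, g, subset_rfl, ⟨p, h1, h2, h3, h4, h5⟩, ?_⟩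
    have : p2 = Walk.nil := Walk.isPath_iff_eq_nil.1 (by rw [hp] at h1; exact h1.of_append_right)
    subst this
    rw [Walk.append_nil] at hp
    subst hp
    intro z hzR hzQ
    exact hz z (by rw [← h3] at hzR; exact hzR) hzQ
  · subst hp
    have hyw : y ≠ w := fun e => hy (e ▸ hw)
    obtain ⟨b, b', hb, e1, e2, e3⟩ := split_append _ _ h1 h2 h4 h5 hyw hwu
    refine ⟨w, hw, _, b, ?_, e1, hz⟩
    rw [← h3]
    intro z hz'
    simp only [Set.mem_ofPred_eq, Walk.mem_support_append_iff] at *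
    exact Or.inl hz'

/-- Two proper paths inside `S` with different first and last colors. -/
def Good (G : SimpleGraph V) (c : Sym2 V → Fin 3) (S : Set V) (x y : V) : Prop :=
  ∃ S1 S2 a b a' b', S1 ⊆ S ∧ S2 ⊆ S ∧ a ≠ a' ∧ b ≠ b' ∧ PP G c S1 x y a b ∧ PP G c S2 x y a' b'

theorem Good.symm {S : Set V} {x y : V} (h : Good G c S x y) : Good G c S y x := by
  obtain ⟨S1, S2, a, b, a', b', h1, h2, h3, h4, h5, h6⟩ := h
  exact ⟨S1, S2, b, a, b', a', h1, h2, h4, h3, h5.symm, h6.symm⟩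

theorem Good.mono {S T : Set V} {x y : V} (h : Good G c S x y) (hST : S ⊆ T) :
    Good G c T x y := by
  obtain ⟨S1, S2, a, b, a', b', h1, h2, h3, h4, h5, h6⟩ := h
  exact ⟨S1, S2, a, b, a', b', h1.trans hST, h2.trans hST, h3, h4, h5, h6⟩

theorem PP.congr {S : Set V} {x y : V} {a b : Fin 3} {c' : Sym2 V → Fin 3}
    (h : PP G c S x y a b) (hc : ∀ s t, s ∈ S → t ∈ S → c' s(s, t) = c s(s, t)) :
    PP G c' S x y a b := by
  obtain ⟨p, h1, h2, h3, h4, h5⟩ := h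
  have : p.edges.map c' = p.edges.map c := by
    apply List.map_congr_left
    intro e he
    induction e with
    | h s t =>
      apply hc
      · rw [← h3]; exact p.fst_mem_support_of_mem_edges he
      · rw [← h3]; exact p.snd_mem_support_of_mem_edges he
  exact ⟨p, h1, this ▸ h2, h3, this ▸ h4, this ▸ h5⟩

theorem Good.congr {S : Set V} {x y : V} {c' : Sym2 V → Fin 3}
    (h : Good G c S x y) (hc : ∀ s t, s ∈ S → t ∈ S → c' s(s, t) = c s(s, t)) :
    Good G c' S x y := by
  obtain ⟨S1, S2, a, b, a', b', h1, h2, h3, h4, h5, h6⟩ := h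
  exact ⟨S1, S2, a, b, a', b', h1, h2, h3, h4,
    h5.congr fun s t hs ht => hc s t (h1 hs) (h1 ht),
    h6.congr fun s t hs ht => hc s t (h2 hs) (h2 ht)⟩

/-- Pairs on the ear, second one lying on the far side. -/
theorem ear_aux {S Q T T1 T2 : Set V} {u v x y : V} {s e α β b b' : Fin 3}
    (hQ : PP G c Q u v s e) (hQS : Q ⊆ S) (hTS : ∀ z, z ∈ T → z ∈ S → z = u ∨ z = v)
    (hs : α ≠ s) (he : β ≠ e) (hb : b ≠ b')
    (h1 : PP G c T1 u x α b) (h2 : PP G c T2 x v b' β)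
    (h12 : ∀ z, z ∈ T1 → z ∈ T2 → z = x) (hT : T1 ∪ T2 = T)
    (hxu : x ≠ u) (hxv : x ≠ v) (hy : y ∈ T2) (hxy : x ≠ y) : Good G c (S ∪ T) x y := by
  have h1T : T1 ⊆ T := hT ▸ Set.subset_union_left
  have h2T : T2 ⊆ T := hT ▸ Set.subset_union_right
  have hv1 : v ∉ T1 := fun h => hxv (h12 v h h2.right_mem).symm
  have hu2 : u ∉ T2 := fun h => hxu (h12 u h1.left_mem h).symm
  have J : PP G c (T1 ∪ Q) x v b e := by
    refine h1.symm.join hQ hs ?_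
    intro z hz hz'
    rcases hTS z (h1T hz) (hQS hz') with h | h
    · exact h
    · subst h; exact absurd hz hv1
  by_cases hyv : y = v
  · subst hyv
    refine ⟨_, _, _, _, _, _, ?_, ?_, hb, he.symm, J, h2⟩
    · exact Set.union_subset (h1T.trans Set.subset_union_right)
        (hQS.trans Set.subset_union_left)
    · exact h2T.trans Set.subset_union_right
  · obtain ⟨T3, T4, k, k', hk, g1, g2, g3, g4⟩ := h2.split hy hxy hyv
    have h3T : T3 ⊆ T2 := g4 ▸ Set.subset_union_left
    have h4T : T4 ⊆ T2 := g4 ▸ Set.subset_union_right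
    refine ⟨_, _, _, _, _, _, ?_, ?_, hb, hk.symm, J.join g2.symm he.symm ?_, g1⟩
    · refine Set.union_subset (Set.union_subset (h1T.trans Set.subset_union_right)
        (hQS.trans Set.subset_union_left)) ?_
      exact (h4T.trans h2T).trans Set.subset_union_right
    · exact (h3T.trans h2T).trans Set.subset_union_right
    · rintro z (hz | hz) hz'
      · have := h12 z hz (h4T hz')
        subst this
        exact absurd (g3 z g1.left_mem hz') hxy
      · rcases hTS z (h2T (h4T hz')) (hQS hz) with h | h
        · subst h; exact absurd (h4T hz') hu2
        · exact h

theorem ear_interior {S Q T : Set V} {u v x y : V} {s e α β : Fin 3}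
    (hQ : PP G c Q u v s e) (hQS : Q ⊆ S) (hTS : ∀ z, z ∈ T → z ∈ S → z = u ∨ z = v)
    (hs : α ≠ s) (he : β ≠ e) (hP : PP G c T u v α β)
    (hx : x ∈ T) (hxu : x ≠ u) (hxv : x ≠ v) (hy : y ∈ T) (hxy : x ≠ y) :
    Good G c (S ∪ T) x y := by
  obtain ⟨T1, T2, b, b', hb, h1, h2, h12, hT⟩ := hP.split hx hxu.symm hxv
  have hy' := hy
  rw [← hT] at hy'
  rcases hy' with hy' | hy'
  · refine ear_aux hQ.symm hQS (fun z h h' => (hTS z h h').symm) he hs hb.symm h2.symm h1.symm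
      (fun z h h' => h12 z h' h) (by rw [Set.union_comm]; exact hT) hxv hxu hy' hxy
  · exact ear_aux hQ hQS hTS hs he hb h1 h2 h12 hT hxu hxv hy' hxy

theorem ear_pairs {S Q T : Set V} {u v x y : V} {s e α β : Fin 3}
    (hQ : PP G c Q u v s e) (hQS : Q ⊆ S) (hTS : ∀ z, z ∈ T → z ∈ S → z = u ∨ z = v)
    (hs : α ≠ s) (he : β ≠ e) (hP : PP G c T u v α β)
    (hx : x ∈ T) (hy : y ∈ T) (hxy : x ≠ y) :
    Good G c (S ∪ T) x y := by
  have huv : Good G c (S ∪ T) u v := ⟨_, _, _, _, _, _, Set.subset_union_right,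
    hQS.trans Set.subset_union_left, hs, he, hP, hQ⟩
  by_cases hx' : x ≠ u ∧ x ≠ v
  · exact ear_interior hQ hQS hTS hs he hP hx hx'.1 hx'.2 hy hxy
  by_cases hy' : y ≠ u ∧ y ≠ v
  · exact (ear_interior hQ hQS hTS hs he hP hy hy'.1 hy'.2 hx hxy.symm).symm
  have hx2 : x = u ∨ x = v := by tauto
  have hy2 : y = u ∨ y = v := by tauto
  rcases hx2 with rfl | rfl <;> rcases hy2 with rfl | rfl
  · exact absurd rfl hxy
  · exact huv
  · exact huv.symm
  · exact absurd rfl hxy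

theorem reroute {R Q : Set V} {u v y : V} {s e α β d g : Fin 3}
    (hQ : PP G c Q u v s e) (hs : α ≠ s) (he : β ≠ e) (huv : u ≠ v)
    (hR : PP G c R y u d g) (hy : y ∉ Q) :
    ∃ A, A ⊆ R ∪ Q ∧ ((∃ t, t ≠ α ∧ PP G c A y u d t) ∨ (∃ t, t ≠ β ∧ PP G c A y v d t)) := by
  obtain ⟨w, hw, R', g', hR', hp, hd⟩ := hR.first_hit hy hQ.left_mem
  have hsub : R' ⊆ R ∪ Q := hR'.trans Set.subset_union_left
  have hsubQ : ∀ Z, Z ⊆ Q → R' ∪ Z ⊆ R ∪ Q := fun Z hZ => Set.union_subset_union hR' hZ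
  by_cases hwu : w = u
  · subst hwu
    by_cases hg : g' = α
    · subst hg
      exact ⟨_, hsubQ Q subset_rfl, Or.inr ⟨e, he.symm, hp.join hQ hs hd⟩⟩
    · exact ⟨_, hsub, Or.inl ⟨g', hg, hp⟩⟩
  by_cases hwv : w = v
  · subst hwv
    by_cases hg : g' = β
    · subst hg
      exact ⟨_, hsubQ Q subset_rfl, Or.inl ⟨s, hs.symm, hp.join hQ.symm he hd⟩⟩
    · exact ⟨_, hsub, Or.inr ⟨g', hg, hp⟩⟩
  obtain ⟨T1, T2, b, b', hb, h1, h2, h12, hT⟩ := hQ.split hw (Ne.symm hwu) hwv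
  have hT1 : T1 ⊆ Q := hT ▸ Set.subset_union_left
  have hT2 : T2 ⊆ Q := hT ▸ Set.subset_union_right
  by_cases hg : g' = b
  · subst hg
    exact ⟨_, hsubQ _ hT2, Or.inr ⟨e, he.symm, hp.join h2 hb fun z h h' => hd z h (hT2 h')⟩⟩
  · exact ⟨_, hsubQ _ hT1, Or.inl ⟨s, hs.symm, hp.join h1.symm hg fun z h h' => hd z h (hT1 h')⟩⟩

theorem ear_mixed {S Q T : Set V} {u v x y : V} {s e α β : Fin 3}
    (hQ : PP G c Q u v s e) (hQS : Q ⊆ S) (hTS : ∀ z, z ∈ T → z ∈ S → z = u ∨ z = v)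
    (hs : α ≠ s) (he : β ≠ e) (hP : PP G c T u v α β) (huv : u ≠ v)
    (hS : ∀ x ∈ S, ∀ y ∈ S, x ≠ y → Good G c S x y)
    (hx : x ∈ T) (hxu : x ≠ u) (hxv : x ≠ v) (hy : y ∈ S) (hyu : y ≠ u) (hyv : y ≠ v) :
    Good G c (S ∪ T) y x := by
  -- reduce to a choice of two paths with different starting colors
  have key : ∃ A B dA dB tA tB, A ⊆ S ∧ B ⊆ S ∧ dA ≠ dB ∧ tA ≠ α ∧ tB ≠ β ∧
      PP G c A y u dA tA ∧ PP G c B y v dB tB := by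
    by_cases hyQ : y ∈ Q
    · obtain ⟨T1, T2, b, b', hb, h1, h2, h12, hT⟩ := hQ.split hyQ hyu.symm hyv
      have hT1 : T1 ⊆ Q := hT ▸ Set.subset_union_left
      have hT2 : T2 ⊆ Q := hT ▸ Set.subset_union_right
      exact ⟨_, _, _, _, _, _, hT1.trans hQS, hT2.trans hQS, hb, hs.symm, he.symm, h1.symm, h2⟩
    · obtain ⟨S1, S2, a1, b1, a2, b2, k1, k2, k3, k4, k5, k6⟩ :=
        hS y hy u (hQS hQ.left_mem) hyu
      obtain ⟨S3, S4, a3, b3, a4, b4, l1, l2, l3, l4, l5, l6⟩ :=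
        hS y hy v (hQS hQ.right_mem) hyv
      have hA : ∃ A d t, A ⊆ S ∧ t ≠ α ∧ PP G c A y u d t := by
        by_cases h : b1 = α
        · exact ⟨_, _, b2, k2, fun h' => k4 (h.trans h'.symm), k6⟩
        · exact ⟨_, _, b1, k1, h, k5⟩
      have hB : ∃ A d t, A ⊆ S ∧ t ≠ β ∧ PP G c A y v d t := by
        by_cases h : b3 = β
        · exact ⟨_, _, b4, l2, fun h' => l4 (h.trans h'.symm), l6⟩
        · exact ⟨_, _, b3, l1, h, l5⟩
      obtain ⟨A, dA, tA, A1, A2, A3⟩ := hA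
      obtain ⟨B, dB, tB, B1, B2, B3⟩ := hB
      by_cases hAB : dA = dB
      · subst hAB
        have : ∃ R d g, d ≠ dA ∧ R ⊆ S ∧ PP G c R y u d g := by
          by_cases h : a1 = dA
          · exact ⟨_, a2, _, fun h' => k3 (h.trans h'.symm), k2, k6⟩
          · exact ⟨_, a1, _, h, k1, k5⟩
        obtain ⟨R, d, g, hd, hR, hRP⟩ := this
        obtain ⟨C, hC, hC'⟩ := reroute hQ hs he huv hRP hyQ
        have hCS : C ⊆ S := hC.trans (Set.union_subset hR hQS)
        rcases hC' with ⟨t, ht, hC'⟩ | ⟨t, ht, hC'⟩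
        · exact ⟨C, B, _, _, _, _, hCS, B1, hd, ht, B2, hC', B3⟩
        · exact ⟨A, C, _, _, _, _, A1, hCS, hd.symm, A2, ht, A3, hC'⟩
      · exact ⟨A, B, _, _, _, _, A1, B1, hAB, A2, B2, A3, B3⟩
  obtain ⟨A, B, dA, dB, tA, tB, A1, B1, hd, A2, B2, A3, B3⟩ := key
  obtain ⟨T1, T2, b, b', hb, h1, h2, h12, hT⟩ := hP.split hx hxu.symm hxv
  have h1T : T1 ⊆ T := hT ▸ Set.subset_union_left
  have h2T : T2 ⊆ T := hT ▸ Set.subset_union_right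
  have hv1 : v ∉ T1 := fun h => hxv (h12 v h h2.right_mem).symm
  have hu2 : u ∉ T2 := fun h => hxu (h12 u h1.left_mem h).symm
  refine ⟨_, _, _, _, _, _, Set.union_subset_union A1 h1T, Set.union_subset_union B1 h2T, hd, hb,
    A3.join h1 A2 ?_, B3.join h2.symm B2 ?_⟩
  · intro z hz hz'
    rcases hTS z (h1T hz') (A1 hz) with h | h
    · exact h
    · subst h; exact absurd hz' hv1
  · intro z hz hz'
    rcases hTS z (h2T hz') (B1 hz) with h | h
    · subst h; exact absurd hz' hu2
    · exact h

theorem exists_colors (n : ℕ) : ∀ a b : Fin 3, ∃ L : List (Fin 3), L.length = n + 2 ∧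
    L.IsChain (· ≠ ·) ∧ ∃ α β, L.head? = some α ∧ L.getLast? = some β ∧ α ≠ a ∧ β ≠ b := by
  induction n with
  | zero =>
    intro a b
    obtain ⟨α, β, h1, h2, h3⟩ : ∃ α β : Fin 3, α ≠ a ∧ β ≠ b ∧ α ≠ β := by
      revert a b; decide
    exact ⟨[α, β], rfl, by simpa using h3, α, β, rfl, rfl, h1, h2⟩
  | succ n ih =>
    intro a b
    obtain ⟨x, hx⟩ : ∃ x : Fin 3, x ≠ a := by revert a; decide
    obtain ⟨L, h1, h2, α, β, h3, h4, h5, h6⟩ := ih x b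
    refine ⟨x :: L, by simp [h1], ?_, x, β, rfl, ?_, hx, h6⟩
    · rw [List.isChain_cons]
      refine ⟨?_, h2⟩
      rw [h3]
      simpa using h5.symm
    · rw [List.getLast?_cons, h4]; rfl

theorem exists_recolor {E : Type*} (c : E → Fin 3) : ∀ (l : List E) (L : List (Fin 3)), l.Nodup →
    L.length = l.length → ∃ c' : E → Fin 3, l.map c' = L ∧ ∀ e, e ∉ l → c' e = c e := by
  classical
  intro l
  induction l with
  | nil =>
    intro L _ hL
    exact ⟨c, (List.length_eq_zero_iff.1 hL).symm, fun _ _ => rfl⟩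
  | cons e l ih =>
    intro L hl hL
    cases L with
    | nil => simp at hL
    | cons a L =>
      rw [List.nodup_cons] at hl
      obtain ⟨c', h1, h2⟩ := ih L hl.2 (by simpa using hL)
      refine ⟨Function.update c' e a, ?_, ?_⟩
      · rw [List.map_cons, Function.update_self, ← h1]
        congr 1
        apply List.map_congr_left
        intro f hf
        rw [Function.update_of_ne]
        rintro rfl
        exact hl.1 hf
      · intro f hf
        rw [List.mem_cons, not_or] at hf
        rw [Function.update_of_ne hf.1, h2 f hf.2]

/-- Existence of ears. -/
theorem exists_ear (h2 : TwoConnected G) (S : Set V) {a b z : V} (ha : a ∈ S) (hb : b ∈ S)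
    (hab : a ≠ b) (hz : z ∉ S) : ∃ u v, ∃ p : G.Walk u v, u ∈ S ∧ v ∈ S ∧ u ≠ v ∧ p.IsPath ∧
      (∃ n, p.edges.length = n + 2) ∧ (∀ w, w ∈ p.support → w ∈ S → w = u ∨ w = v) ∧
      (∀ s t, s ∈ S → t ∈ S → s(s, t) ∉ p.edges) ∧ ∃ w ∈ p.support, w ∉ S := by
  classical
  have walk : ∀ v x y : V, x ≠ v → y ≠ v → ∃ p : G.Walk x y, v ∉ p.support := by
    intro v x y hx hy
    have hx' : x ∈ ({v}ᶜ : Set V) := hx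
    have hy' : y ∈ ({v}ᶜ : Set V) := hy
    obtain ⟨q⟩ := (h2.2 v).preconnected ⟨x, hx'⟩ ⟨y, hy'⟩
    suffices h : v ∉ (q.map (Embedding.induce _).toHom).support from
      ⟨q.map (Embedding.induce _).toHom, h⟩
    rw [Walk.support_map, List.mem_map]
    rintro ⟨⟨w, hw⟩, _, h⟩
    exact hw h
  obtain ⟨p0, _⟩ := walk b a z hab (fun h => hz (h ▸ hb))
  obtain ⟨d, _, hd1, hd2⟩ := p0.exists_boundary_dart S ha hz
  obtain ⟨⟨s, x⟩, hsx⟩ := d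
  simp only at hd1 hd2 hsx
  obtain ⟨t0, ht0, hts⟩ : ∃ t0 ∈ S, t0 ≠ s := by
    by_cases h : a = s
    · exact ⟨b, hb, fun h' => hab (h.trans h'.symm)⟩
    · exact ⟨a, ha, h⟩
  obtain ⟨q, hq⟩ := walk s x t0 (fun h => hd2 (h ▸ hd1)) hts
  have hq' : s ∉ q.bypass.support := fun h => hq (q.support_bypass_subset_support h)
  obtain ⟨t, p1, p2, ht, hp, hfirst⟩ := walk_first_hit S q.bypass ht0
  have hpath : p1.IsPath := by
    have := q.bypass_isPath
    rw [hp] at this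
    exact this.of_append_left
  have hs1 : s ∉ p1.support := by
    intro h
    apply hq'
    rw [hp, Walk.mem_support_append_iff]
    exact Or.inl h
  have hxt : x ≠ t := fun h => hd2 (h ▸ ht)
  have hst : s ≠ t := fun h => hs1 (h ▸ p1.end_mem_support)
  refine ⟨s, t, Walk.cons hsx p1, hd1, ht, hst, hpath.cons hs1, ?_, ?_, ?_, x, by simp, hd2⟩
  · cases p1 with
    | nil => exact absurd rfl hxt
    | cons h p => exact ⟨p.edges.length, by simp⟩
  · intro w hw hwS
    rw [Walk.support_cons, List.mem_cons] at hw
    rcases hw with h | h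
    · exact Or.inl h
    · exact Or.inr (hfirst w h hwS)
  · intro s' t' hs' ht' hmem
    rw [Walk.edges_cons, List.mem_cons] at hmem
    rcases hmem with h | h
    · have : x ∈ s(s', t') := by rw [h]; simp
      rw [Sym2.mem_iff] at this
      rcases this with rfl | rfl
      · exact hd2 hs'
      · exact hd2 ht'
    · have e1 := hfirst _ (p1.fst_mem_support_of_mem_edges h) hs'
      have e2 := hfirst _ (p1.snd_mem_support_of_mem_edges h) ht'
      have := p1.adj_of_mem_edges h
      rw [e1, e2] at this
      exact G.loopless.irrefl _ this

/-- One ear-step on colorings. -/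
theorem color_ear (c : Sym2 V → Fin 3) {S : Set V} {u v : V} (p : G.Walk u v) (hp : p.IsPath)
    (hlen : ∃ n, p.edges.length = n + 2)
    (hE : ∀ s t, s ∈ S → t ∈ S → s(s, t) ∉ p.edges) (s e : Fin 3) :
    ∃ c' : Sym2 V → Fin 3, (∀ s t, s ∈ S → t ∈ S → c' s(s, t) = c s(s, t)) ∧
      ∃ α β, α ≠ s ∧ β ≠ e ∧ PP G c' {z | z ∈ p.support} u v α β := by
  obtain ⟨n, hn⟩ := hlen
  obtain ⟨L, h1, h2, α, β, h3, h4, h5, h6⟩ := exists_colors n s e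
  obtain ⟨c', k1, k2⟩ := exists_recolor c p.edges L
    (Walk.edges_nodup_of_support_nodup ((Walk.isPath_def p).1 hp)) (h1.trans hn.symm)
  refine ⟨c', fun s t hs ht => k2 _ (hE s t hs ht), α, β, h5, h6, p, hp, ?_, rfl, ?_, ?_⟩
  · rw [k1]; exact h2
  · rw [k1]; exact h3
  · rw [k1]; exact h4

/-- Strongly colorable vertex sets. -/
def Inv (G : SimpleGraph V) (S : Set V) : Prop :=
  (∃ a ∈ S, ∃ b ∈ S, a ≠ b) ∧
    ∃ c : Sym2 V → Fin 3, ∀ x ∈ S, ∀ y ∈ S, x ≠ y → Good G c S x y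

theorem inv_step (h2 : TwoConnected G) {S : Set V} (hS : Inv G S) {z : V} (hz : z ∉ S) :
    ∃ T, Inv G T ∧ S ⊂ T := by
  obtain ⟨⟨a, ha, b, hb, hab⟩, c, hc⟩ := hS
  obtain ⟨u, v, p, hu, hv, huv, hp, hlen, hTS, hE, w, hw, hwS⟩ := exists_ear h2 S ha hb hab hz
  obtain ⟨Q, _, s, e, _, _, hQS, _, _, _, hQ, _⟩ := hc u hu v hv huv
  obtain ⟨c', hcc, α, β, hs, he, hP⟩ := color_ear c p hp hlen hE s e
  have hQ' := hQ.congr (fun s t hs ht => hcc s t (hQS hs) (hQS ht))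
  have hc' : ∀ x ∈ S, ∀ y ∈ S, x ≠ y → Good G c' S x y :=
    fun x hx y hy hxy => (hc x hx y hy hxy).congr hcc
  set T : Set V := {z | z ∈ p.support} with hTdef
  have hmix : ∀ x ∈ S, ∀ y ∈ T, x ≠ y → Good G c' (S ∪ T) x y := by
    intro x hx y hy hxy
    by_cases hyS : y ∈ S
    · exact (hc' x hx y hyS hxy).mono Set.subset_union_left
    by_cases hxT : x ∈ T
    · exact ear_pairs hQ' hQS hTS hs he hP hxT hy hxy
    · exact ear_mixed hQ' hQS hTS hs he hP huv hc' hy (fun h => hyS (h ▸ hu))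
        (fun h => hyS (h ▸ hv)) hx (fun h => hxT (h ▸ hP.left_mem))
        (fun h => hxT (h ▸ hP.right_mem))
  refine ⟨S ∪ T, ⟨⟨a, Or.inl ha, b, Or.inl hb, hab⟩, c', ?_⟩, ?_⟩
  · rintro x (hx | hx) y (hy | hy) hxy
    · exact (hc' x hx y hy hxy).mono Set.subset_union_left
    · exact hmix x hx y hy hxy
    · exact (hmix y hy x hx hxy.symm).symm
    · exact ear_pairs hQ' hQS hTS hs he hP hx hy hxy
  · exact ⟨Set.subset_union_left, fun h => hwS (h (Or.inr hw))⟩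

theorem inv_base [Fintype V] (h2 : TwoConnected G) : ∃ S, Inv G S := by
  classical
  have h3 : 2 < Fintype.card V := by have := h2.1; rw [Nat.card_eq_fintype_card] at this; omega
  obtain ⟨a0, b0, z0, hab0, haz0, hbz0⟩ := Fintype.two_lt_card_iff.1 h3
  obtain ⟨q⟩ := (h2.2 z0).preconnected ⟨a0, haz0⟩ ⟨b0, hbz0⟩
  obtain ⟨d, _, hd1, hd2⟩ := (q.map (Embedding.induce _).toHom).exists_boundary_dart {a0} rfl
    (fun h => hab0 (Eq.symm h))
  obtain ⟨⟨a, b⟩, hab⟩ := d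
  have hne : a ≠ b := hab.ne
  obtain ⟨z, hza, hzb⟩ : ∃ z, z ≠ a ∧ z ≠ b := by
    by_contra! hcon
    have := Finset.card_le_two (a := a) (b := b)
    have h4 : (Finset.univ : Finset V) ⊆ {a, b} := by
      intro z _
      by_cases h : z = a
      · simp [h]
      · simp [hcon z h]
    have := Finset.card_le_card h4
    rw [Finset.card_univ] at this
    omega
  obtain ⟨u, v, p, hu, hv, huv, hp, hlen, hTS, hE, w, hw, hwS⟩ :=
    exists_ear h2 ({a, b} : Set V) (by simp) (by simp) hne (z := z) (by simp [hza, hzb])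
  have huvadj : G.Adj u v := by
    rcases hu with rfl | rfl <;> rcases hv with rfl | rfl
    · exact absurd rfl huv
    · exact hab
    · exact hab.symm
    · exact absurd rfl huv
  obtain ⟨c', hcc, α, β, hs, he, hP⟩ := color_ear (fun _ => 0) p hp hlen hE 0 0
  have hQ : PP G c' {z | z ∈ huvadj.toWalk.support} u v 0 0 := by
    have := hcc u v hu hv
    refine ⟨huvadj.toWalk, Walk.IsPath.of_adj huvadj, ?_, rfl, ?_, ?_⟩ <;> simp [this]
  have hQS : {z | z ∈ huvadj.toWalk.support} ⊆ ({a, b} : Set V) := by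
    intro z hz
    simp only [Walk.support_cons, Walk.support_nil, List.mem_cons, List.not_mem_nil, or_false,
      Set.mem_ofPred_eq] at hz
    rcases hz with rfl | rfl
    · exact hu
    · exact hv
  have hsub : ({a, b} : Set V) ⊆ {z | z ∈ p.support} := by
    have h1 := hP.left_mem
    have h2 := hP.right_mem
    rcases hu with rfl | rfl <;> rcases hv with rfl | rfl
    · exact absurd rfl huv
    · rintro z (rfl | rfl) <;> assumption
    · rintro z (rfl | rfl) <;> assumption
    · exact absurd rfl huv
  refine ⟨{z | z ∈ p.support}, ⟨u, hP.left_mem, v, hP.right_mem, huv⟩, c', ?_⟩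
  intro x hx y hy hxy
  have := ear_pairs (T := {z | z ∈ p.support}) hQ hQS hTS hs he hP hx hy hxy
  rwa [Set.union_eq_self_of_subset_left hsub] at this

theorem inv_univ [Fintype V] (h2 : TwoConnected G) : Inv G (Set.univ : Set V) := by
  obtain ⟨S, hS⟩ := (Set.toFinite {S : Set V | Inv G S}).exists_maximal (inv_base h2)
  by_cases h : S = Set.univ
  · exact h ▸ hS.1
  · obtain ⟨z, hz⟩ := (Set.ne_univ_iff_exists_notMem S).1 h
    obtain ⟨T, hT, hST⟩ := inv_step h2 hS.1 hz
    exact absurd (hS.2 hT hST.1) hST.2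

end PCProof

/-- If `G` is 2-connected, then `pc G ≤ 3` and there is a proper-path 3-coloring of `G`
with the strong property. -/
theorem pc_twoConnected_le_three {V : Type*} [Fintype V] (G : SimpleGraph V)
    (h2 : TwoConnected G) :
    pc G ≤ 3 ∧ ∃ c : Sym2 V → Fin 3, IsProperPathColoring G c ∧ HasStrongProperty G c := by
  obtain ⟨_, c, hc⟩ := PCProof.inv_univ h2
  have hs : HasStrongProperty G c := by
    intro u v huv
    obtain ⟨S1, S2, a, b, a', b', _, _, h3, h4, ⟨p, p1, p2, _, p4, p5⟩, ⟨q, q1, q2, _, q4, q5⟩⟩ :=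
      hc u trivial v trivial huv
    refine ⟨p, q, p1, p2, q1, q2, ?_, ?_⟩
    · rw [p4, q4]; simpa using h3
    · rw [p5, q5]; simpa using h4
  have hp : IsProperPathColoring G c := by
    intro u v huv
    obtain ⟨p, _, h1, h2, _⟩ := hs u v huv
    exact ⟨p, h1, h2⟩
  exact ⟨Nat.sInf_le ⟨c, hp⟩, c, hp, hs⟩
end

section
/- Let G be a simple graph on n = 5 vertices such that both G and its complement Ḡ are connected. Then pc(G) + pc(Ḡ) = 5 if G ≅ T(2,3) or Ḡ ≅ T(2,3), and pc(G) + pc(Ḡ) = 4 otherwise. -/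
open SimpleGraph

/-- The double star `T(2, n-2)` on `n` vertices: the centers `0` (of degree `n-2`) and `1`
(of degree `2`) are adjacent, vertex `2` is the leaf attached to center `1`, and vertices
`3, …, n-1` are the leaves attached to center `0`. -/
def doubleStarT2 (n : ℕ) : SimpleGraph (Fin n) :=
  SimpleGraph.fromRel (fun x y =>
    (x.val = 0 ∧ y.val = 1) ∨ (x.val = 1 ∧ y.val = 2) ∨ (x.val = 0 ∧ 3 ≤ y.val))

namespace NG5

def any5 (f : Fin 5 → Bool) : Bool := f 0 || f 1 || f 2 || f 3 || f 4
def all5 (f : Fin 5 → Bool) : Bool := f 0 && f 1 && f 2 && f 3 && f 4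

theorem any5_iff (f : Fin 5 → Bool) : any5 f = true ↔ ∃ i, f i = true := by
  simp [any5, Fin.exists_fin_succ, or_assoc]
theorem all5_iff (f : Fin 5 → Bool) : all5 f = true ↔ ∀ i, f i = true := by
  simp [all5, Fin.forall_fin_succ, and_assoc]

def look (b01 b02 b03 b04 b12 b13 b14 b23 b24 b34 : Bool) : Fin 5 → Fin 5 → Bool
  | 0, 1 => b01 | 0, 2 => b02 | 0, 3 => b03 | 0, 4 => b04
  | 1, 0 => b01 | 1, 2 => b12 | 1, 3 => b13 | 1, 4 => b14
  | 2, 0 => b02 | 2, 1 => b12 | 2, 3 => b23 | 2, 4 => b24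
  | 3, 0 => b03 | 3, 1 => b13 | 3, 2 => b23 | 3, 4 => b34
  | 4, 0 => b04 | 4, 1 => b14 | 4, 2 => b24 | 4, 3 => b34
  | _, _ => false

/-- No isolated vertex, no dominating vertex, no isolated pair. -/
def hyp (A : Fin 5 → Fin 5 → Bool) : Bool :=
  all5 fun i => any5 (fun j => A i j) && any5 (fun j => !(i == j) && !A i j) &&
    all5 fun j => any5 fun k => !(k == i) && !(k == j) && (A i k || A j k)

def ham (A : Fin 5 → Fin 5 → Bool) : Bool :=
  any5 fun a => any5 fun b => A a b && any5 fun c => A b c && !(c == a) &&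
    any5 fun d => A c d && !(d == a) && !(d == b) &&
    any5 fun e => A d e && !(e == a) && !(e == b) && !(e == c)

def spider (A : Fin 5 → Fin 5 → Bool) : Bool :=
  any5 fun a => any5 fun b => A a b && any5 fun c => A b c && !A a c && !(c == a) &&
    any5 fun d => A a d && !A b d && !A c d && !(d == b) && !(d == c) &&
    any5 fun e => A a e && !A b e && !A c e && !A d e && !(e == b) && !(e == c) && !(e == d)

def check (A : Fin 5 → Fin 5 → Bool) : Bool := !(hyp A) || (ham A || spider A)

theorem key_bits : ∀ b01 b02 b03 b04 b12 b13 b14 b23 b24 b34 : Bool,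
    check (look b01 b02 b03 b04 b12 b13 b14 b23 b24 b34) = true := by
  decide +kernel

theorem key_fun (A : Fin 5 → Fin 5 → Bool) (hs : ∀ i j, A i j = A j i) (hi : ∀ i, A i i = false)
    (h : hyp A = true) : ham A = true ∨ spider A = true := by
  have hA : A = look (A 0 1) (A 0 2) (A 0 3) (A 0 4) (A 1 2) (A 1 3) (A 1 4) (A 2 3) (A 2 4)
      (A 3 4) := by
    funext i j
    fin_cases i <;> fin_cases j <;> first | exact hi _ | rfl | exact hs _ _
  have hk := key_bits (A 0 1) (A 0 2) (A 0 3) (A 0 4) (A 1 2) (A 1 3) (A 1 4) (A 2 3) (A 2 4)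
      (A 3 4)
  rw [← hA] at hk
  simpa [check, h] using hk

theorem crossing {V : Type*} {G : SimpleGraph V} (hG : G.Connected) (S : Set V) {x y : V}
    (hx : x ∈ S) (hy : y ∉ S) : ∃ a b, a ∈ S ∧ b ∉ S ∧ G.Adj a b := by
  obtain ⟨p⟩ := hG.preconnected x y
  obtain ⟨d, -, h1, h2⟩ := p.exists_boundary_dart S hx hy
  exact ⟨d.fst, d.snd, h1, h2, d.adj⟩

theorem transfer {V W : Type*} {H : SimpleGraph W} {G : SimpleGraph V} (e : W ≃ V)
    (he : ∀ a b, H.Adj a b → G.Adj (e a) (e b)) {k : ℕ}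
    (h : ∃ c : Sym2 W → Fin k, IsProperPathColoring H c) :
    ∃ c : Sym2 V → Fin k, IsProperPathColoring G c := by
  obtain ⟨c, hc⟩ := h
  refine ⟨fun z => c (z.map e.symm), ?_⟩
  intro u v huv
  obtain ⟨p, hp, hch⟩ := hc (e.symm u) (e.symm v) (fun h => huv (e.symm.injective h))
  let φ : H →g G := ⟨e, fun {a b} h => he a b h⟩
  have hφ : Function.Injective φ := e.injective
  refine ⟨(p.map φ).copy (e.apply_symm_apply u) (e.apply_symm_apply v), ?_, ?_⟩
  · rw [Walk.isPath_copy]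
    exact Walk.map_isPath_of_injective hφ hp
  · rw [Walk.edges_copy, Walk.edges_map, List.map_map]
    have : ((fun z : Sym2 V => c (z.map e.symm)) ∘ Sym2.map φ) = c := by
      funext z
      induction z with
      | _ x y => simp [φ]
    rw [this]
    exact hch

/-- It suffices to treat one ordering of every pair. -/
theorem ppc_of_lt {n k : ℕ} (G : SimpleGraph (Fin n)) (c : Sym2 (Fin n) → Fin k)
    (h : ∀ u v : Fin n, u < v → ∃ p : G.Walk u v, p.IsPath ∧ (p.edges.map c).IsChain (· ≠ ·)) :
    IsProperPathColoring G c := by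
  intro u v huv
  rcases lt_or_gt_of_ne huv with h1 | h1
  · exact h u v h1
  · obtain ⟨p, hp, hc⟩ := h v u h1
    refine ⟨p.reverse, hp.reverse, ?_⟩
    rw [Walk.edges_reverse, List.map_reverse]
    refine List.isChain_reverse.2 (hc.imp ?_)
    intro a b hab
    exact hab.symm

def P5 : SimpleGraph (Fin 5) := SimpleGraph.fromRel (fun x y => x.val + 1 = y.val)

instance : DecidableRel P5.Adj := fun a b => by unfold P5; simp only [fromRel_adj]; infer_instance
instance : DecidableRel (doubleStarT2 5).Adj :=
  fun a b => by unfold doubleStarT2; simp only [fromRel_adj]; infer_instance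

def cP : Sym2 (Fin 5) → Fin 2 := fun z => if z = s(0, 1) ∨ z = s(2, 3) then 0 else 1
def cT : Sym2 (Fin 5) → Fin 3 := fun z =>
  if z = s(0, 1) then 0 else if z = s(0, 4) then 2 else 1

theorem ppc_P5 : IsProperPathColoring P5 cP := by
  apply ppc_of_lt
  have h01 : P5.Adj 0 1 := by decide
  have h12 : P5.Adj 1 2 := by decide
  have h23 : P5.Adj 2 3 := by decide
  have h34 : P5.Adj 3 4 := by decide
  intro u v huv
  fin_cases u <;> fin_cases v <;> first | (exfalso; revert huv; decide) | skip
  · exact ⟨.cons h01 .nil, Walk.IsPath.mk' (by decide +revert), by decide +revert⟩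
  · exact ⟨.cons h01 (.cons h12 .nil), Walk.IsPath.mk' (by decide +revert), by decide +revert⟩
  · exact ⟨.cons h01 (.cons h12 (.cons h23 .nil)), Walk.IsPath.mk' (by decide +revert), by decide +revert⟩
  · exact ⟨.cons h01 (.cons h12 (.cons h23 (.cons h34 .nil))), Walk.IsPath.mk' (by decide +revert), by decide +revert⟩
  · exact ⟨.cons h12 .nil, Walk.IsPath.mk' (by decide +revert), by decide +revert⟩
  · exact ⟨.cons h12 (.cons h23 .nil), Walk.IsPath.mk' (by decide +revert), by decide +revert⟩
  · exact ⟨.cons h12 (.cons h23 (.cons h34 .nil)), Walk.IsPath.mk' (by decide +revert), by decide +revert⟩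
  · exact ⟨.cons h23 .nil, Walk.IsPath.mk' (by decide +revert), by decide +revert⟩
  · exact ⟨.cons h23 (.cons h34 .nil), Walk.IsPath.mk' (by decide +revert), by decide +revert⟩
  · exact ⟨.cons h34 .nil, Walk.IsPath.mk' (by decide +revert), by decide +revert⟩

theorem ppc_T : IsProperPathColoring (doubleStarT2 5) cT := by
  apply ppc_of_lt
  have h01 : (doubleStarT2 5).Adj 0 1 := by decide
  have h12 : (doubleStarT2 5).Adj 1 2 := by decide
  have h03 : (doubleStarT2 5).Adj 0 3 := by decide
  have h04 : (doubleStarT2 5).Adj 0 4 := by decide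
  intro u v huv
  fin_cases u <;> fin_cases v <;> first | (exfalso; revert huv; decide) | skip
  · exact ⟨.cons h01 .nil, Walk.IsPath.mk' (by decide +revert), by decide +revert⟩
  · exact ⟨.cons h01 (.cons h12 .nil), Walk.IsPath.mk' (by decide +revert), by decide +revert⟩
  · exact ⟨.cons h03 .nil, Walk.IsPath.mk' (by decide +revert), by decide +revert⟩
  · exact ⟨.cons h04 .nil, Walk.IsPath.mk' (by decide +revert), by decide +revert⟩
  · exact ⟨.cons h12 .nil, Walk.IsPath.mk' (by decide +revert), by decide +revert⟩
  · exact ⟨.cons h01.symm (.cons h03 .nil), Walk.IsPath.mk' (by decide +revert), by decide +revert⟩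
  · exact ⟨.cons h01.symm (.cons h04 .nil), Walk.IsPath.mk' (by decide +revert), by decide +revert⟩
  · exact ⟨.cons h12.symm (.cons h01.symm (.cons h03 .nil)), Walk.IsPath.mk' (by decide +revert), by decide +revert⟩
  · exact ⟨.cons h12.symm (.cons h01.symm (.cons h04 .nil)), Walk.IsPath.mk' (by decide +revert), by decide +revert⟩
  · exact ⟨.cons h03.symm (.cons h04 .nil), Walk.IsPath.mk' (by decide +revert), by decide +revert⟩

theorem connT : (doubleStarT2 5).Connected := by
  have : Nonempty (Fin 5) := ⟨0⟩
  refine SimpleGraph.Connected.mk ?_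
  intro u v
  by_cases h : u = v
  · subst h; exact Reachable.refl _
  · obtain ⟨p, -⟩ := ppc_T u v h
    exact ⟨p⟩

theorem treeT : (doubleStarT2 5).IsTree := by
  rw [isTree_iff_connected_and_card]
  refine ⟨connT, ?_⟩
  rw [Nat.card_eq_fintype_card, Nat.card_eq_fintype_card]
  decide

theorem T_lower {k : ℕ} (c : Sym2 (Fin 5) → Fin k)
    (hc : IsProperPathColoring (doubleStarT2 5) c) : 3 ≤ k := by
  have h01 : (doubleStarT2 5).Adj 0 1 := by decide
  have h03 : (doubleStarT2 5).Adj 0 3 := by decide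
  have h04 : (doubleStarT2 5).Adj 0 4 := by decide
  have key : ∀ (a b : Fin 5), a ≠ b → (ha : (doubleStarT2 5).Adj 0 a) →
      (hb : (doubleStarT2 5).Adj 0 b) → c s(0, a) ≠ c s(0, b) := by
    intro a b hab ha hb
    obtain ⟨p, hp, hch⟩ := hc a b hab
    have hq : (Walk.cons ha.symm (Walk.cons hb Walk.nil)).IsPath := by
      simp [hab, ha.ne', hb.ne]
    have := treeT.isAcyclic.path_unique ⟨p, hp⟩ ⟨_, hq⟩
    have hpq := congrArg Subtype.val this
    simp only at hpq
    subst hpq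
    have : c s(a, 0) ≠ c s(0, b) := (List.isChain_cons_cons.1 hch).1
    rwa [Sym2.eq_swap] at this
  have a1 := key 1 3 (by decide) h01 h03
  have a2 := key 1 4 (by decide) h01 h04
  have a3 := key 3 4 (by decide) h03 h04
  rw [Ne, Fin.ext_iff] at a1 a2 a3
  have b1 := (c s(0, 1)).isLt
  have b2 := (c s(0, 3)).isLt
  have b3 := (c s(0, 4)).isLt
  omega

theorem low {V : Type*} {G : SimpleGraph V} {u v : V} (huv : u ≠ v) (hn : ¬ G.Adj u v) {k : ℕ}
    (c : Sym2 V → Fin k) (hc : IsProperPathColoring G c) : 2 ≤ k := by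
  obtain ⟨p, -, hch⟩ := hc u v huv
  cases p with
  | nil => exact absurd rfl huv
  | cons h q =>
    cases q with
    | nil => exact absurd h hn
    | @cons _ w _ h' r =>
      simp only [Walk.edges_cons, List.map_cons] at hch
      have hne := (List.isChain_cons_cons.1 hch).1
      have := Fin.nontrivial_iff_two_le.1 ⟨_, _, hne⟩
      exact this

theorem pc_eq {V : Type*} {G : SimpleGraph V} {m : ℕ}
    (h1 : ∃ c : Sym2 V → Fin m, IsProperPathColoring G c)
    (h2 : ∀ k, (∃ c : Sym2 V → Fin k, IsProperPathColoring G c) → m ≤ k) : pc G = m :=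
  le_antisymm (Nat.sInf_le h1) (le_csInf ⟨m, h1⟩ h2)

theorem exists_nonadj {V : Type*} [Fintype V] {G : SimpleGraph V} (hn : Fintype.card V = 5)
    (hGc : Gᶜ.Connected) : ∃ u v, u ≠ v ∧ ¬ G.Adj u v := by
  have : Nontrivial V := Fintype.one_lt_card_iff_nontrivial.1 (by omega)
  obtain ⟨x, y, hxy⟩ := exists_pair_ne V
  obtain ⟨a, b, -, -, h⟩ := crossing hGc {x} (x := x) (y := y) rfl (fun h => hxy h.symm)
  exact ⟨a, b, (compl_adj G a b).1 h⟩

theorem pc_two {V : Type*} [Fintype V] {G : SimpleGraph V} (hn : Fintype.card V = 5)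
    (hGc : Gᶜ.Connected) (f : Fin 5 ≃ V) (hf : ∀ a b, P5.Adj a b → G.Adj (f a) (f b)) :
    pc G = 2 := by
  obtain ⟨u, v, huv, hadj⟩ := exists_nonadj hn hGc
  exact pc_eq (transfer f hf ⟨_, ppc_P5⟩) (fun k ⟨c, hc⟩ => low huv hadj c hc)

theorem pc_T {V : Type*} {G : SimpleGraph V} (e : G ≃g doubleStarT2 5) : pc G = 3 := by
  refine pc_eq (transfer e.symm.toEquiv (fun a b h => e.symm.map_adj_iff.2 h) ⟨_, ppc_T⟩) ?_
  intro k hk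
  obtain ⟨c, hc⟩ := transfer e.toEquiv (fun a b h => e.map_adj_iff.2 h) hk
  exact T_lower c hc

/-- The images of `0, …, 4` along five distinct values. -/
theorem vec_bij (a b c d e : Fin 5) (h : [a, b, c, d, e].Nodup) :
    Function.Bijective ![a, b, c, d, e] := by
  rw [← Finite.injective_iff_bijective]
  apply List.nodup_ofFn.1
  simpa using h

theorem pc_Tc {V : Type*} [Fintype V] {G : SimpleGraph V} (hn : Fintype.card V = 5)
    (hG : G.Connected) (e : G ≃g doubleStarT2 5) : pc Gᶜ = 2 := by
  have hb := vec_bij 0 2 3 1 4 (by decide)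
  refine pc_two hn (by rwa [compl_compl]) ((Equiv.ofBijective _ hb).trans e.symm.toEquiv) ?_
  intro a b h
  have h2 : ∀ a b : Fin 5, P5.Adj a b →
      (![0, 2, 3, 1, 4] a : Fin 5) ≠ ![0, 2, 3, 1, 4] b ∧
      ¬ (doubleStarT2 5).Adj (![0, 2, 3, 1, 4] a) (![0, 2, 3, 1, 4] b) := by decide
  obtain ⟨h3, h4⟩ := h2 a b h
  rw [compl_adj]
  refine ⟨fun h => h3 (e.symm.injective h), fun h => h4 ?_⟩
  exact e.symm.map_adj_iff.1 h

theorem key {V : Type*} [Fintype V] {G : SimpleGraph V} (hn : Fintype.card V = 5)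
    (hG : G.Connected) (hGc : Gᶜ.Connected) :
    Nonempty (G ≃g doubleStarT2 5) ∨ pc G = 2 := by
  classical
  have e : Fin 5 ≃ V := (Fintype.equivFinOfCardEq hn).symm
  let A : Fin 5 → Fin 5 → Bool := fun i j => decide (G.Adj (e i) (e j))
  have hA : ∀ i j, A i j = true ↔ G.Adj (e i) (e j) := fun i j => decide_eq_true_iff
  have hA' : ∀ i j, A i j = false ↔ ¬ G.Adj (e i) (e j) := fun i j => decide_eq_false_iff_not
  have hcut : ∀ (H : SimpleGraph V), H.Connected → ∀ i j : Fin 5, ∃ k, k ≠ i ∧ k ≠ j ∧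
      (H.Adj (e i) (e k) ∨ H.Adj (e j) (e k)) := by
    intro H hH i j
    obtain ⟨m, hm1, hm2⟩ : ∃ m : Fin 5, m ≠ i ∧ m ≠ j := by revert i j; decide
    obtain ⟨x, y, hx, hy, hxy⟩ := crossing hH {e i, e j} (x := e i) (y := e m) (by simp)
      (by simp [hm1, hm2])
    obtain ⟨k, rfl⟩ := e.surjective y
    simp only [Set.mem_insert_iff, Set.mem_singleton_iff, not_or, e.injective.eq_iff] at hx hy
    refine ⟨k, hy.1, hy.2, ?_⟩
    rcases hx with rfl | rfl
    · exact Or.inl hxy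
    · exact Or.inr hxy
  have hh : hyp A = true := by
    simp only [hyp, all5_iff, any5_iff, Bool.and_eq_true, Bool.or_eq_true, Bool.not_eq_true',
      beq_eq_false_iff_ne, hA, hA']
    intro i
    refine ⟨⟨?_, ?_⟩, ?_⟩
    · obtain ⟨k, -, -, h⟩ := hcut G hG i i
      exact ⟨k, by simpa using h⟩
    · obtain ⟨k, h1, -, h⟩ := hcut _ hGc i i
      refine ⟨k, h1.symm, ?_⟩
      rw [or_self, compl_adj] at h
      exact h.2
    · intro j
      obtain ⟨k, h1, h2, h⟩ := hcut G hG i j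
      exact ⟨k, ⟨h1, h2⟩, h⟩
  have hs : ∀ i j, A i j = A j i := fun i j => by simp [A, G.adj_comm]
  have hi : ∀ i, A i i = false := fun i => by simp [A]
  have hne : ∀ {i j}, G.Adj (e i) (e j) → i ≠ j := fun h h' => h.ne (congrArg e h')
  rcases key_fun A hs hi hh with h | h
  · right
    simp only [ham, any5_iff, Bool.and_eq_true, Bool.not_eq_true', beq_eq_false_iff_ne, hA] at h
    obtain ⟨a, b, hab, c, ⟨hbc, hca⟩, d, ⟨⟨hcd, hda⟩, hdb⟩, x, ⟨⟨hdx, hxa⟩, hxb⟩, hxc⟩ := h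
    have n1 := hne hab
    have n2 := hne hbc
    have n3 := hne hcd
    have n4 := hne hdx
    have hb := vec_bij a b c d x (by simp; tauto)
    refine pc_two hn hGc ((Equiv.ofBijective _ hb).trans e) ?_
    intro i j hij
    fin_cases i <;> fin_cases j <;>
      first
      | (exfalso; revert hij; decide)
      | exact hab | exact hbc | exact hcd | exact hdx
      | exact hab.symm | exact hbc.symm | exact hcd.symm | exact hdx.symm
  · left
    simp only [spider, any5_iff, Bool.and_eq_true, Bool.not_eq_true', beq_eq_false_iff_ne, hA,
      hA'] at h
    obtain ⟨a, b, hab, c, ⟨⟨hbc, hac⟩, hca⟩, d, ⟨⟨⟨⟨had, hbd⟩, hcd⟩, hdb⟩, hdc⟩, x,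
      ⟨⟨⟨⟨⟨⟨hax, hbx⟩, hcx⟩, hdx⟩, hxb⟩, hxc⟩, hxd⟩⟩ := h
    have n1 := hne hab
    have n2 := hne hbc
    have n3 := hne had
    have n4 := hne hax
    have hb := vec_bij a b c d x (by simp; tauto)
    let g : Fin 5 ≃ V := (Equiv.ofBijective _ hb).trans e
    refine ⟨(RelIso.mk g ?_ : doubleStarT2 5 ≃g G).symm⟩
    intro i j
    have h2 : ∀ p q : Fin 5, (doubleStarT2 5).Adj p q → G.Adj (g p) (g q) := by
      intro p q hpq
      fin_cases p <;> fin_cases q <;>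
        first
        | (exfalso; revert hpq; decide)
        | exact hab | exact hbc | exact had | exact hax
        | exact hab.symm | exact hbc.symm | exact had.symm | exact hax.symm
    have h3 : ∀ p q : Fin 5, ¬ (doubleStarT2 5).Adj p q → ¬ G.Adj (g p) (g q) := by
      intro p q hpq
      fin_cases p <;> fin_cases q <;>
        first
        | exact G.loopless.irrefl _
        | (exfalso; revert hpq; decide)
        | exact hac | exact hbd | exact hbx | exact hcd | exact hcx | exact hdx
        | exact fun h => hac h.symm | exact fun h => hbd h.symm | exact fun h => hbx h.symm
        | exact fun h => hcd h.symm | exact fun h => hcx h.symm | exact fun h => hdx h.symm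
    exact ⟨fun h => by_contra fun h' => h3 i j h' h, h2 i j⟩

end NG5

/-- For a graph `G` on 5 vertices with `G` and `Gᶜ` both connected:
`pc G + pc Gᶜ = 5` if `G ≅ T(2,3)` or `Gᶜ ≅ T(2,3)`, and `pc G + pc Gᶜ = 4` otherwise. -/
theorem nordhaus_gaddum_card_five {V : Type*} [Fintype V] (G : SimpleGraph V)
    (hn : Fintype.card V = 5) (hG : G.Connected) (hGc : Gᶜ.Connected) :
    ((Nonempty (G ≃g doubleStarT2 5) ∨ Nonempty (Gᶜ ≃g doubleStarT2 5)) →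
      pc G + pc Gᶜ = 5) ∧
    (¬ (Nonempty (G ≃g doubleStarT2 5) ∨ Nonempty (Gᶜ ≃g doubleStarT2 5)) →
      pc G + pc Gᶜ = 4) := by
  constructor
  · rintro (⟨⟨e⟩⟩ | ⟨⟨e⟩⟩)
    · rw [NG5.pc_T e, NG5.pc_Tc hn hG e]
    · have h1 := NG5.pc_T e
      have h2 := NG5.pc_Tc hn hGc e
      rw [compl_compl] at h2
      rw [h1, h2]
  · intro h
    have h1 := (NG5.key hn hG hGc).resolve_left (fun h' => h (Or.inl h'))
    have h2 := (NG5.key hn hGc (by rwa [compl_compl])).resolve_left (fun h' => h (Or.inr h'))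
    rw [h1, h2]
end

section
/- Let G be a simple graph on n ≥ 5 vertices such that both G and its complement Ḡ are connected. Then pc(G) + pc(Ḡ) ≤ n, and equality holds if and only if G ≅ T(2, n−2) or Ḡ ≅ T(2, n−2). -/
open SimpleGraph

section NG
open Classical

variable {V : Type*}

/-- `G[S]` is connected, phrased through cuts. -/
def ConnOn (G : SimpleGraph V) (S : Finset V) : Prop :=
  ∀ A : Finset V, A ⊆ S → A.Nonempty → A ≠ S → ∃ x ∈ A, ∃ y ∈ S, y ∉ A ∧ G.Adj x y

/-- `a b c d` is an induced path. -/
def IsP4 (G : SimpleGraph V) (a b c d : V) : Prop :=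
  G.Adj a b ∧ G.Adj b c ∧ G.Adj c d ∧ ¬ G.Adj a c ∧ ¬ G.Adj a d ∧ ¬ G.Adj b d ∧
    a ≠ c ∧ a ≠ d ∧ b ≠ d

theorem IsP4.compl {G : SimpleGraph V} {a b c d : V} (h : IsP4 G a b c d) :
    IsP4 Gᶜ b d a c := by
  obtain ⟨h1, h2, h3, h4, h5, h6, h7, h8, h9⟩ := h
  have := h1.ne
  have := h2.ne
  have := h3.ne
  simp only [IsP4, SimpleGraph.compl_adj]
  refine ⟨⟨h9, h6⟩, ⟨h8.symm, fun h => h5 h.symm⟩, ⟨h7, h4⟩, fun h => h.2 h1.symm,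
    fun h => h.2 h2, fun h => h.2 h3.symm, ?_, ?_, ?_⟩ <;> (intro h; subst h; simp_all)

theorem connOn_univ [Fintype V] {G : SimpleGraph V} (h : G.Connected) :
    ConnOn G Finset.univ := by
  intro A _ hne hA
  obtain ⟨x, hx⟩ := hne
  obtain ⟨y, hy⟩ : ∃ y, y ∉ A := by
    by_contra hc
    push Not at hc
    exact hA (Finset.eq_univ_iff_forall.2 hc)
  obtain ⟨p⟩ := h.preconnected x y
  obtain ⟨d, _, h1, h2⟩ := p.exists_boundary_dart (A : Set V) (by simpa using hx) (by simpa using hy)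
  exact ⟨d.fst, by simpa using h1, d.snd, Finset.mem_univ _, by simpa using h2, d.adj⟩

theorem connOn_singleton (G : SimpleGraph V) (x : V) : ConnOn G {x} := by
  intro A h1 h2 h3
  rcases Finset.subset_singleton_iff.1 h1 with h | h
  · simp [h] at h2
  · exact absurd h h3

theorem ConnOn.insert {G : SimpleGraph V} {S : Finset V} (h : ConnOn G S) {u v : V}
    (hu : u ∈ S) (huv : G.Adj u v) : ConnOn G (insert v S) := by
  intro A h1 h2 h3
  by_cases hv : v ∈ A
  · by_cases hu' : u ∈ A
    · by_cases hS : A ∩ S = S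
      · exfalso
        apply h3
        apply Finset.Subset.antisymm h1
        intro z hz
        rcases Finset.mem_insert.1 hz with rfl | hz
        · exact hv
        · rw [← hS] at hz
          exact (Finset.mem_inter.1 hz).1
      · obtain ⟨x, hx, y, hy, hyA, hxy⟩ := h (A ∩ S) Finset.inter_subset_right
          ⟨u, Finset.mem_inter.2 ⟨hu', hu⟩⟩ hS
        exact ⟨x, (Finset.mem_inter.1 hx).1, y, Finset.mem_insert_of_mem hy,
          fun hh => hyA (Finset.mem_inter.2 ⟨hh, hy⟩), hxy⟩
    · exact ⟨v, hv, u, Finset.mem_insert_of_mem hu, hu', huv.symm⟩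
  · by_cases hu' : u ∈ A
    · exact ⟨u, hu', v, Finset.mem_insert_self _ _, hv, huv⟩
    · have hAS : A ⊆ S := by
        intro z hz
        rcases Finset.mem_insert.1 (h1 hz) with rfl | hz'
        · exact absurd hz hv
        · exact hz'
      obtain ⟨x, hx, y, hy, hyA, hxy⟩ := h A hAS h2 (fun hh => hu' (hh ▸ hu))
      exact ⟨x, hx, y, Finset.mem_insert_of_mem hy, hyA, hxy⟩

theorem ConnOn.exists_adj {G : SimpleGraph V} {S : Finset V} (h : ConnOn G S) {v : V}
    (hv : v ∈ S) (hc : 2 ≤ S.card) : ∃ y ∈ S, y ≠ v ∧ G.Adj v y := by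
  obtain ⟨x, hx, y, hy, hyA, hxy⟩ := h {v} (by simpa using hv) ⟨v, by simp⟩ (by
    intro hh; rw [← hh] at hc; simp at hc)
  rw [Finset.mem_singleton] at hx hyA
  subst hx
  exact ⟨y, hy, hyA, hxy⟩

theorem p4_aux {G : SimpleGraph V} {S A : Finset V} (h : ConnOn G S) {v y0 z : V}
    (hv : v ∈ S) (hAS : A ⊆ S) (hvA : v ∉ A)
    (hA : ∀ x ∈ A, ∀ y ∈ S, y ≠ v → y ∉ A → ¬ G.Adj x y)
    (hy0 : y0 ∈ A) (hy0v : ¬ G.Adj v y0) (hz : z ∈ S) (hzA : z ∉ A) (hvz : G.Adj v z) :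
    ∃ a ∈ S, ∃ b ∈ S, ∃ c ∈ S, ∃ d ∈ S, IsP4 G a b c d := by
  obtain ⟨y, hy, x, hx, hxA, hyx⟩ := h (A.filter (fun x => ¬ G.Adj v x))
    ((Finset.filter_subset _ _).trans hAS) ⟨y0, by simp [hy0, hy0v]⟩
    (by intro hh; rw [← hh] at hz; exact hzA (Finset.mem_filter.1 hz).1)
  rw [Finset.mem_filter] at hy hxA
  have hxv : x ≠ v := by rintro rfl; exact hy.2 hyx.symm
  have hxA' : x ∈ A := by
    by_contra hc
    exact hA y hy.1 x hx hxv hc hyx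
  have hvx : G.Adj v x := by
    by_contra hc
    exact hxA ⟨hxA', hc⟩
  refine ⟨y, hAS hy.1, x, hx, v, hv, z, hz, hyx, hvx.symm, hvz, fun h => hy.2 h.symm,
    hA y hy.1 z hz hvz.ne' hzA, hA x hxA' z hz hvz.ne' hzA, ?_, ?_, ?_⟩
  · rintro rfl; exact hvA hy.1
  · rintro rfl; exact hzA hy.1
  · rintro rfl; exact hzA hxA'

theorem p4_of_disconn {G : SimpleGraph V} {S : Finset V} (h : ConnOn G S) (h' : ConnOn Gᶜ S)
    {v : V} (hv : v ∈ S) (hd : ¬ ConnOn G (S.erase v)) :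
    ∃ a ∈ S, ∃ b ∈ S, ∃ c ∈ S, ∃ d ∈ S, IsP4 G a b c d := by
  simp only [ConnOn, not_forall] at hd
  obtain ⟨A, hA1, hA2, hA3, hA4⟩ := hd
  push Not at hA4
  have hvA : v ∉ A := fun hh => (Finset.mem_erase.1 (hA1 hh)).1 rfl
  have hAS : A ⊆ S := hA1.trans (Finset.erase_subset _ _)
  set B := (S.erase v) \ A with hB
  have memB : ∀ x, x ∈ B ↔ x ∈ S ∧ x ≠ v ∧ x ∉ A := by
    intro x; simp only [hB, Finset.mem_sdiff, Finset.mem_erase]; tauto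
  have hBne : B.Nonempty := by
    by_contra hc
    rw [Finset.not_nonempty_iff_eq_empty, hB, Finset.sdiff_eq_empty_iff_subset] at hc
    exact hA3 (Finset.Subset.antisymm hA1 hc)
  have hvB : v ∉ B := fun hh => ((memB v).1 hh).2.1 rfl
  have hBS : B ⊆ S := fun x hx => ((memB x).1 hx).1
  have hAe : ∀ x ∈ A, ∀ y ∈ S, y ≠ v → y ∉ A → ¬ G.Adj x y := fun x hx y hy hyv hyA =>
    hA4 x hx y (Finset.mem_erase.2 ⟨hyv, hy⟩) hyA
  have hBe : ∀ x ∈ B, ∀ y ∈ S, y ≠ v → y ∉ B → ¬ G.Adj x y := by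
    intro x hx y hy hyv hyB hxy
    have hx' := (memB x).1 hx
    have hyA : y ∈ A := by
      by_contra hc
      exact hyB ((memB y).2 ⟨hy, hyv, hc⟩)
    exact hAe y hyA x hx'.1 hx'.2.1 hx'.2.2 hxy.symm
  -- neighbours of v on both sides
  have nb : ∀ C : Finset V, C ⊆ S → C.Nonempty → v ∉ C →
      (∀ x ∈ C, ∀ y ∈ S, y ≠ v → y ∉ C → ¬ G.Adj x y) → ∃ z ∈ C, G.Adj v z := by
    intro C hC hCne hvC hCe
    obtain ⟨x, hx, y, hy, hyC, hxy⟩ := h C hC hCne (fun hh => hvC (hh ▸ hv))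
    by_cases hyv : y = v
    · subst hyv; exact ⟨x, hx, hxy.symm⟩
    · exact absurd hxy (hCe x hx y hy hyv hyC)
  obtain ⟨zA, hzA, hvzA⟩ := nb A hAS hA2 hvA hAe
  obtain ⟨zB, hzB, hvzB⟩ := nb B hBS hBne hvB hBe
  have hzB' := (memB zB).1 hzB
  have hzAB : zA ∉ B := fun hh => ((memB _).1 hh).2.2 hzA
  obtain ⟨y0, hy0, hy0v, hvy0⟩ := h'.exists_adj hv (by
    rw [Nat.succ_le_iff, Finset.one_lt_card]
    exact ⟨v, hv, zA, hAS hzA, hvzA.ne⟩)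
  rw [SimpleGraph.compl_adj] at hvy0
  by_cases hyA : y0 ∈ A
  · exact p4_aux h hv hAS hvA hAe hyA hvy0.2 hzB'.1 hzB'.2.2 hvzB
  · exact p4_aux h hv hBS hvB hBe ((memB _).2 ⟨hy0, hy0v, hyA⟩) hvy0.2 (hAS hzA) hzAB hvzA

theorem exists_P4 {G : SimpleGraph V} : ∀ (m : ℕ) (S : Finset V), S.card = m → 2 ≤ m →
    ConnOn G S → ConnOn Gᶜ S → ∃ a ∈ S, ∃ b ∈ S, ∃ c ∈ S, ∃ d ∈ S, IsP4 G a b c d := by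
  intro m
  induction m with
  | zero => intro S _ h; omega
  | succ m ih =>
    intro S hS hm h h'
    obtain ⟨v, hv⟩ : S.Nonempty := Finset.card_pos.1 (by omega)
    by_cases h1 : ConnOn G (S.erase v)
    · by_cases h2 : ConnOn Gᶜ (S.erase v)
      · have hc : (S.erase v).card = m := by rw [Finset.card_erase_of_mem hv]; omega
        by_cases hm2 : 2 ≤ m
        · obtain ⟨a, ha, b, hb, c, hc, d, hd, hp⟩ := ih _ hc hm2 h1 h2
          exact ⟨a, Finset.mem_of_mem_erase ha, b, Finset.mem_of_mem_erase hb, c,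
            Finset.mem_of_mem_erase hc, d, Finset.mem_of_mem_erase hd, hp⟩
        · exfalso
          have hc1 : (S.erase v).card = 1 := by omega
          obtain ⟨w, hw⟩ := Finset.card_eq_one.1 hc1
          obtain ⟨y, hy, hyv, hvy⟩ := h.exists_adj hv (by omega)
          obtain ⟨y', hy', hyv', hvy'⟩ := h'.exists_adj hv (by omega)
          have e1 : y ∈ S.erase v := Finset.mem_erase.2 ⟨hyv, hy⟩
          have e2 : y' ∈ S.erase v := Finset.mem_erase.2 ⟨hyv', hy'⟩
          rw [hw, Finset.mem_singleton] at e1 e2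
          subst e1; subst e2
          exact hvy'.2 hvy
      · have := p4_of_disconn (G := Gᶜ) h' (by rwa [compl_compl]) hv h2
        obtain ⟨a, ha, b, hb, c, hc, d, hd, hp⟩ := this
        have hp' := hp.compl
        rw [compl_compl] at hp'
        exact ⟨b, hb, d, hd, a, ha, c, hc, hp'⟩
    · exact p4_of_disconn h h' hv h1

theorem IsP4.connOn {G : SimpleGraph V} {a b c d : V} (h : IsP4 G a b c d) :
    ConnOn G {a, b, c, d} := by
  obtain ⟨h1, h2, h3, -⟩ := h
  have := (((connOn_singleton G d).insert (u := d) (v := c) (by simp) h3.symm).insert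
    (u := c) (v := b) (by simp) h2.symm).insert (u := b) (v := a) (by simp) h1.symm
  exact this

theorem module_erase {G : SimpleGraph V} {S T : Finset V} (h : ConnOn G S) (hT : T ⊆ S)
    (hTS : T ≠ S) (hmod : ∀ w ∈ S, w ∉ T → ∀ x ∈ T, ∀ y ∈ T, G.Adj w x → G.Adj w y)
    {s s0 : V} (hs : s ∈ T) (hs0 : s0 ∈ T) (hne : s0 ≠ s) : ConnOn G (S.erase s) := by
  intro A hA hAne hAS
  have hsA : s ∉ A := fun hh => (Finset.mem_erase.1 (hA hh)).1 rfl
  have hAS' : A ⊆ S := hA.trans (Finset.erase_subset _ _)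
  obtain ⟨t, ht, w, hw, hwT, htw⟩ := h T hT ⟨s, hs⟩ hTS
  have hwa : ∀ y ∈ T, G.Adj w y := fun y hy => hmod w hw hwT t ht y hy htw.symm
  have hws : w ≠ s := fun hh => hwT (hh ▸ hs)
  by_cases hsplit : ∃ a ∈ A, a ∈ T ∧ ∃ y ∈ T, y ≠ s ∧ y ∉ A
  · obtain ⟨a, ha, haT, y, hy, hys, hyA⟩ := hsplit
    by_cases hwA : w ∈ A
    · exact ⟨w, hwA, y, Finset.mem_erase.2 ⟨hys, hT hy⟩, hyA, hwa y hy⟩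
    · exact ⟨a, ha, w, Finset.mem_erase.2 ⟨hws, hw⟩, hwA, (hwa a haT).symm⟩
  · push Not at hsplit
    by_cases h0 : s0 ∈ A
    · have hall : ∀ y ∈ T, y ≠ s → y ∈ A := hsplit s0 h0 hs0
      obtain ⟨x, hx, y, hy, hyA, hxy⟩ := h (insert s A)
        (Finset.insert_subset (hT hs) hAS') ⟨s, by simp⟩ (by
          intro hh
          apply hAS
          rw [← hh, Finset.erase_insert hsA])
      rw [Finset.mem_insert, not_or] at hyA
      rcases Finset.mem_insert.1 hx with rfl | hxA
      · have hyT : y ∉ T := fun hh => hyA.2 (hall y hh hyA.1)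
        exact ⟨s0, h0, y, Finset.mem_erase.2 ⟨hyA.1, hy⟩, hyA.2,
          (hmod y hy hyT x hs s0 hs0 hxy.symm).symm⟩
      · exact ⟨x, hxA, y, Finset.mem_erase.2 ⟨hyA.1, hy⟩, hyA.2, hxy⟩
    · obtain ⟨x, hx, y, hy, hyA, hxy⟩ := h A hAS' hAne (fun hh => hsA (hh ▸ hT hs))
      by_cases hys : y = s
      · subst hys
        have hxT : x ∉ T := fun hh => h0 (hsplit x hx hh s0 hs0 hne)
        exact ⟨x, hx, s0, Finset.mem_erase.2 ⟨hne, hT hs0⟩, h0,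
          hmod x (hAS' hx) hxT y hs s0 hs0 hxy⟩
      · exact ⟨x, hx, y, Finset.mem_erase.2 ⟨hys, hy⟩, hyA, hxy⟩

theorem exists_removable {G : SimpleGraph V} {S : Finset V} (hS : 5 ≤ S.card)
    (h : ConnOn G S) (h' : ConnOn Gᶜ S) :
    ∃ v ∈ S, ConnOn G (S.erase v) ∧ ConnOn Gᶜ (S.erase v) := by
  obtain ⟨a, ha, b, hb, c, hc, d, hd, hp⟩ := exists_P4 S.card S rfl (by omega) h h'
  have hpc : ConnOn Gᶜ {a, b, c, d} := by
    have := hp.compl.connOn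
    convert this using 1
    ext; simp; tauto
  let F := S.powerset.filter (fun T => T ≠ S ∧ 2 ≤ T.card ∧ ConnOn G T ∧ ConnOn Gᶜ T)
  have hF : F.Nonempty := by
    refine ⟨{a, b, c, d}, ?_⟩
    simp only [F, Finset.mem_filter, Finset.mem_powerset]
    refine ⟨?_, ?_, ?_, hp.connOn, hpc⟩
    · intro x hx
      simp only [Finset.mem_insert, Finset.mem_singleton] at hx
      rcases hx with rfl | rfl | rfl | rfl <;> assumption
    · intro hh
      rw [← hh] at hS
      have := Finset.card_le_four (a := a) (b := b) (c := c) (d := d)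
      omega
    · rw [Nat.succ_le_iff, Finset.one_lt_card]
      exact ⟨a, by simp, b, by simp, hp.1.ne⟩
  obtain ⟨T, hTF, hmax⟩ := Finset.exists_max_image F Finset.card hF
  simp only [F, Finset.mem_filter, Finset.mem_powerset] at hTF hmax
  obtain ⟨hTS, hTne, hT2, hTG, hTGc⟩ := hTF
  by_cases hone : ∃ v ∈ S, v ∉ T ∧ insert v T = S
  · obtain ⟨v, hv, hvT, hvS⟩ := hone
    refine ⟨v, hv, ?_⟩
    rw [← hvS, Finset.erase_insert hvT]
    exact ⟨hTG, hTGc⟩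
  · push Not at hone
    have key : ∀ w ∈ S, w ∉ T → ∀ x ∈ T, ∀ y ∈ T, G.Adj w x → G.Adj w y := by
      intro w hw hwT x hx y hy hwx
      by_contra hwy
      have := hmax (insert w T) ⟨Finset.insert_subset hw hTS, hone w hw hwT, by
        rw [Finset.card_insert_of_notMem hwT]; omega, hTG.insert hx hwx.symm,
        hTGc.insert hy (by
          rw [SimpleGraph.compl_adj]
          exact ⟨fun hh => hwT (hh ▸ hy), fun hh => hwy hh.symm⟩)⟩
      rw [Finset.card_insert_of_notMem hwT] at this
      omega
    have key' : ∀ w ∈ S, w ∉ T → ∀ x ∈ T, ∀ y ∈ T, Gᶜ.Adj w x → Gᶜ.Adj w y := by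
      intro w hw hwT x hx y hy hwx
      rw [SimpleGraph.compl_adj] at hwx ⊢
      exact ⟨fun hh => hwT (hh ▸ hy), fun hh => hwx.2 (key w hw hwT y hy x hx hh)⟩
    obtain ⟨s, hs, s0, hs0, hne⟩ := Finset.one_lt_card.1 (by omega : 1 < T.card)
    exact ⟨s, hTS hs, module_erase h hTS hTne key hs hs0 hne.symm,
      module_erase h' hTS hTne key' hs hs0 hne.symm⟩

/-- `u` and `w` are joined inside `S` by a proper path, all of whose edge colours at each of its
vertices `x` belong to the palette `D x`. -/
def Link (G : SimpleGraph V) (S : Finset V) (c : Sym2 V → ℕ) (D : V → Finset ℕ) (u w : V) :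
    Prop :=
  ∃ p : G.Walk u w, p.IsPath ∧ (∀ x ∈ p.support, x ∈ S) ∧
    (p.edges.map c).IsChain (· ≠ ·) ∧ ∀ e ∈ p.edges, ∀ x ∈ e, c e ∈ D x

theorem Link.symm {G : SimpleGraph V} {S : Finset V} {c : Sym2 V → ℕ} {D : V → Finset ℕ}
    {u w : V} (h : Link G S c D u w) : Link G S c D w u := by
  obtain ⟨p, h1, h2, h3, h4⟩ := h
  refine ⟨p.reverse, h1.reverse, ?_, ?_, ?_⟩
  · intro x hx
    exact h2 x (by simpa using hx)
  · rw [SimpleGraph.Walk.edges_reverse, List.map_reverse, List.isChain_reverse]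
    exact h3.imp (fun a b hab => hab.symm)
  · intro e he
    exact h4 e (by simpa using he)

/-- A properly edge-coloured spanning tree of `G[S]` with palettes `D` in `{0,…,k-1}`. -/
structure TC (G : SimpleGraph V) (S : Finset V) (k : ℕ) (c : Sym2 V → ℕ)
    (D : V → Finset ℕ) : Prop where
  range : ∀ u, D u ⊆ Finset.range k
  sum : ∑ u ∈ S, (D u).card + 2 = 2 * S.card
  link : ∀ u ∈ S, ∀ w ∈ S, Link G S c D u w

/-- `G[S]` has a spanning tree of maximum degree at most `k` (with a proper edge colouring). -/
def HasTree (G : SimpleGraph V) (S : Finset V) (k : ℕ) : Prop := ∃ c D, TC G S k c D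

theorem TC.mono {G : SimpleGraph V} {S : Finset V} {k l : ℕ} {c : Sym2 V → ℕ}
    {D : V → Finset ℕ} (h : TC G S k c D) (hkl : k ≤ l) : TC G S l c D :=
  ⟨fun u => (h.range u).trans (Finset.range_subset_range.2 hkl), h.sum, h.link⟩

theorem TC.attach {G : SimpleGraph V} {S : Finset V} {k : ℕ} {c : Sym2 V → ℕ}
    {D : V → Finset ℕ} (h : TC G S k c D) {u v : V} (hu : u ∈ S) (hv : v ∉ S)
    (huv : G.Adj u v) {α : ℕ} (hα : α < k) (hαu : α ∉ D u) :
    TC G (insert v S) k (fun e => if e = s(v, u) then α else c e)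
      (fun x => if x = v then {α} else if x = u then insert α (D u) else D x) := by
  have hune : u ≠ v := huv.ne
  have hlink : ∀ x ∈ S, ∀ w ∈ S, Link G (insert v S)
      (fun e => if e = s(v, u) then α else c e)
      (fun x => if x = v then {α} else if x = u then insert α (D u) else D x) x w := by
    intro x hx w hw
    obtain ⟨p, h1, h2, h3, h4⟩ := h.link x hx w hw
    have hvp : v ∉ p.support := fun hh => hv (h2 v hh)
    have hc : ∀ e ∈ p.edges, (if e = s(v, u) then α else c e) = c e := by
      intro e he
      rw [if_neg]
      rintro rfl
      exact hvp (p.fst_mem_support_of_mem_edges he)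
    refine ⟨p, h1, fun x hx => Finset.mem_insert_of_mem (h2 x hx), ?_, ?_⟩
    · rwa [List.map_congr_left hc]
    · intro e he y hy
      simp only [hc e he]
      have hyS : y ∈ p.support := p.mem_support_of_mem_edges he hy
      have hyv : y ≠ v := fun hh => hvp (hh ▸ hyS)
      rw [if_neg hyv]
      split_ifs with hyu
      · subst hyu
        exact Finset.mem_insert_of_mem (h4 e he y hy)
      · exact h4 e he y hy
  have hlinkv : ∀ w ∈ S, Link G (insert v S)
      (fun e => if e = s(v, u) then α else c e)
      (fun x => if x = v then {α} else if x = u then insert α (D u) else D x) v w := by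
    intro w hw
    obtain ⟨p, h1, h2, h3, h4⟩ := h.link u hu w hw
    have hvp : v ∉ p.support := fun hh => hv (h2 v hh)
    have hc : ∀ e ∈ p.edges, (if e = s(v, u) then α else c e) = c e := by
      intro e he
      rw [if_neg]
      rintro rfl
      exact hvp (p.fst_mem_support_of_mem_edges he)
    refine ⟨SimpleGraph.Walk.cons huv.symm p, ?_, ?_, ?_, ?_⟩
    · rw [SimpleGraph.Walk.cons_isPath_iff]
      exact ⟨h1, hvp⟩
    · intro x hx
      rw [SimpleGraph.Walk.support_cons, List.mem_cons] at hx
      rcases hx with rfl | hx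
      · simp
      · exact Finset.mem_insert_of_mem (h2 x hx)
    · rw [SimpleGraph.Walk.edges_cons, List.map_cons, List.map_congr_left hc, List.isChain_cons]
      refine ⟨?_, h3⟩
      intro y hy
      rw [if_pos rfl]
      cases p with
      | nil => simp at hy
      | cons hux q =>
        simp only [SimpleGraph.Walk.edges_cons, List.map_cons, List.head?_cons,
          Option.mem_some_iff] at hy
        rintro rfl
        apply hαu
        rw [← hy]
        exact h4 _ (by simp) u (by simp)
    · intro e he y hy
      rw [SimpleGraph.Walk.edges_cons, List.mem_cons] at he
      rcases he with rfl | he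
      · simp only [if_true]
        rw [Sym2.mem_iff] at hy
        rcases hy with rfl | rfl
        · simp
        · simp [hune]
      · simp only [hc e he]
        have hyS : y ∈ p.support := p.mem_support_of_mem_edges he hy
        have hyv : y ≠ v := fun hh => hvp (hh ▸ hyS)
        rw [if_neg hyv]
        split_ifs with hyu
        · subst hyu
          exact Finset.mem_insert_of_mem (h4 e he y hy)
        · exact h4 e he y hy
  refine ⟨?_, ?_, ?_⟩
  · intro x
    split_ifs
    · simpa using hα
    · intro z hz
      rcases Finset.mem_insert.1 hz with rfl | hz
      · simpa using hα
      · exact h.range u hz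
    · exact h.range x
  · rw [Finset.sum_insert hv, Finset.card_insert_of_notMem hv]
    have hs := h.sum
    rw [← Finset.add_sum_erase S _ hu] at hs ⊢
    have : ∑ x ∈ S.erase u, (if x = v then {α} else if x = u then insert α (D u) else D x).card
        = ∑ x ∈ S.erase u, (D x).card := by
      apply Finset.sum_congr rfl
      intro x hx
      rw [Finset.mem_erase] at hx
      rw [if_neg (fun hh : x = v => hv (hh ▸ hx.2)), if_neg hx.1]
    rw [this]
    simp only [if_true, if_neg hune, Finset.card_singleton, Finset.card_insert_of_notMem hαu]
    omega
  · intro x hx w hw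
    rcases Finset.mem_insert.1 hx with rfl | hx1
    · rcases Finset.mem_insert.1 hw with rfl | hw1
      · exact ⟨SimpleGraph.Walk.nil, by simp, by simp, by simp, by simp⟩
      · exact hlinkv w hw1
    · rcases Finset.mem_insert.1 hw with rfl | hw1
      · exact (hlinkv x hx1).symm
      · exact hlink x hx1 w hw1

theorem TC.succ {G : SimpleGraph V} {S : Finset V} {k : ℕ} {c : Sym2 V → ℕ}
    {D : V → Finset ℕ} (h : TC G S k c D) {u v : V} (hu : u ∈ S) (hv : v ∉ S)
    (huv : G.Adj u v) : ∃ c' D', TC G (insert v S) (k + 1) c' D' ∧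
      ∀ x, x ≠ u → x ≠ v → D' x = D x := by
  refine ⟨_, _, (h.mono (Nat.le_succ k)).attach hu hv huv (Nat.lt_succ_self k) ?_, ?_⟩
  · intro hh
    simpa using h.range u hh
  · intro x h1 h2
    simp [h1, h2]

theorem HasTree.succ {G : SimpleGraph V} {S : Finset V} {k : ℕ} (h : HasTree G S k) {u v : V}
    (hu : u ∈ S) (hv : v ∉ S) (huv : G.Adj u v) : HasTree G (insert v S) (k + 1) := by
  obtain ⟨c, D, h⟩ := h
  obtain ⟨c', D', h', -⟩ := h.succ hu hv huv
  exact ⟨c', D', h'⟩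

/-- Two new leaves at different vertices cost one colour only. -/
theorem HasTree.succ₂ {G : SimpleGraph V} {S : Finset V} {k : ℕ} (h : HasTree G S k)
    {u v u' v' : V} (hu : u ∈ S) (hv : v ∉ S) (huv : G.Adj u v) (hu' : u' ∈ S) (hv' : v' ∉ S)
    (huv' : G.Adj u' v') (hne : u ≠ u') (hne' : v ≠ v') :
    HasTree G (insert v' (insert v S)) (k + 1) := by
  obtain ⟨c, D, h⟩ := h
  obtain ⟨c', D', h', hD⟩ := h.succ hu hv huv
  refine ⟨_, _, h'.attach (Finset.mem_insert_of_mem hu') (by simp [hv', hne'.symm]) huv'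
    (Nat.lt_succ_self k) ?_⟩
  rw [hD u' hne.symm (fun hh => hv (hh ▸ hu'))]
  intro hh
  simpa using h.range u' hh

/-- Growing a tree to all of a connected set. -/
theorem HasTree.grow {G : SimpleGraph V} {T : Finset V} (hT : ConnOn G T) :
    ∀ (j k : ℕ) (S : Finset V), S ⊆ T → S.Nonempty → S.card + j = T.card → HasTree G S k →
      HasTree G T (k + j) := by
  intro j
  induction j with
  | zero =>
    intro k S hS _ hc h
    rwa [← Finset.eq_of_subset_of_card_le hS (by omega)]
  | succ j ih =>
    intro k S hS hne hc h
    obtain ⟨x, hx, y, hy, hyS, hxy⟩ := hT S hS hne (by rintro rfl; omega)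
    have := ih (k + 1) (insert y S) (Finset.insert_subset hy hS) (by simp)
      (by rw [Finset.card_insert_of_notMem hyS]; omega) (h.succ hx hyS hxy)
    rwa [show k + (j + 1) = k + 1 + j by omega]

/-- The number of vertices with a full palette is small. -/
theorem TC.count {G : SimpleGraph V} {S X : Finset V} {k : ℕ} {c : Sym2 V → ℕ}
    {D : V → Finset ℕ} (h : TC G S k c D) (hS : 2 ≤ S.card) (hk : 3 ≤ k) (hX : X ⊆ S)
    (hfull : ∀ x ∈ X, k ≤ (D x).card) : 2 * X.card + 2 ≤ S.card := by
  have hpos : ∀ x ∈ S, 1 ≤ (D x).card := by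
    intro x hx
    obtain ⟨w, hw, hwx⟩ := Finset.exists_mem_ne (by omega : 1 < S.card) x
    obtain ⟨p, -, -, -, h4⟩ := h.link x hx w hw
    cases p with
    | nil => exact absurd rfl hwx
    | @cons _ y _ hux q => exact Finset.card_pos.2 ⟨_, h4 s(x, y) (by simp) x (by simp)⟩
  have h1 : ∑ x ∈ S, (1 + if x ∈ X then 2 else 0) ≤ ∑ x ∈ S, (D x).card := by
    apply Finset.sum_le_sum
    intro x hx
    split_ifs with hxX
    · have := hfull x hxX; omega
    · exact hpos x hx
  rw [Finset.sum_add_distrib, ← Finset.sum_filter, Finset.filter_mem_eq_inter,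
    Finset.inter_eq_right.2 hX] at h1
  simp only [Finset.sum_const, smul_eq_mul] at h1
  have := h.sum
  omega

/-- `G[S]` has a Hamiltonian path. -/
def HamPath (G : SimpleGraph V) (S : Finset V) : Prop :=
  ∃ l : List V, l.Nodup ∧ (∀ x, x ∈ l ↔ x ∈ S) ∧ l.IsChain G.Adj

theorem tree_of_list {G : SimpleGraph V} : ∀ (t : List V) (a : V), (a :: t).Nodup →
    (a :: t).IsChain G.Adj → ∃ c D, TC G (a :: t).toFinset 2 c D ∧ (D a).card ≤ 1 := by
  intro t
  induction t with
  | nil =>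
    intro a _ _
    refine ⟨fun _ => 0, fun _ => ∅, ⟨by simp, by simp, ?_⟩, by simp⟩
    intro u hu w hw
    simp only [List.toFinset_cons, List.toFinset_nil, Finset.mem_insert, Finset.notMem_empty,
      or_false] at hu hw
    subst hu; subst hw
    exact ⟨SimpleGraph.Walk.nil, by simp, by simp, by simp, by simp⟩
  | cons b t ih =>
    intro a hnd hch
    rw [List.isChain_cons_cons] at hch
    rw [List.nodup_cons] at hnd
    obtain ⟨c, D, h, hD⟩ := ih b hnd.2 hch.2
    obtain ⟨α, hα2, hα⟩ : ∃ α ∈ Finset.range 2, α ∉ D b := by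
      apply Finset.exists_mem_notMem_of_card_lt_card
      simp; omega
    rw [List.toFinset_cons (a := a)]
    refine ⟨_, _, h.attach (u := b) (v := a) (by simp) (by simpa using hnd.1) hch.1.symm
      (Finset.mem_range.1 hα2) hα, by simp⟩

theorem HamPath.hasTree {G : SimpleGraph V} {S : Finset V} (h : HamPath G S)
    (hS : S.Nonempty) : HasTree G S 2 := by
  obtain ⟨l, h1, h2, h3⟩ := h
  have hl : l.toFinset = S := by ext; simp [h2]
  cases l with
  | nil =>
    exfalso
    rw [← hl] at hS
    simp at hS
  | cons a t =>
    obtain ⟨c, D, h, -⟩ := tree_of_list t a h1 h3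
    rw [hl] at h
    exact ⟨c, D, h⟩

theorem list_insert {G : SimpleGraph V} (v : V) : ∀ (n : ℕ) (t : List V) (a : V),
    t.length = n → (a :: t).IsChain G.Adj → ¬ G.Adj v a →
    (∃ t', (a :: t').Perm (v :: a :: t) ∧ (a :: t').IsChain G.Adj) ∨
      2 * (t.filter (fun x => G.Adj v x)).length ≤ t.length := by
  intro n
  induction n using Nat.strong_induction_on with
  | _ n ih =>
    intro t a hn hch hva
    rcases t with _ | ⟨b, t⟩
    · right; simp
    rw [List.isChain_cons_cons] at hch
    by_cases hb : G.Adj v b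
    · rcases t with _ | ⟨c, t⟩
      · left
        refine ⟨[b, v], ?_, ?_⟩
        · rw [← Multiset.coe_eq_coe]
          simp only [← Multiset.cons_coe]
          rw [Multiset.cons_swap b v, Multiset.cons_swap a v]
        · simp [hch.1, hb.symm]
      · rw [List.isChain_cons_cons] at hch
        by_cases hc : G.Adj v c
        · left
          refine ⟨b :: v :: c :: t, ?_, ?_⟩
          · rw [← Multiset.coe_eq_coe]
            simp only [← Multiset.cons_coe]
            rw [Multiset.cons_swap b v, Multiset.cons_swap a v]
          · simp only [List.isChain_cons_cons]
            exact ⟨hch.1, hb.symm, hc, hch.2.2⟩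
        · simp only [List.length_cons] at hn
          rcases ih t.length (by omega) t c rfl hch.2.2 hc with ⟨t', h1, h2⟩ | h
          · left
            refine ⟨b :: c :: t', ?_, ?_⟩
            · rw [← Multiset.coe_eq_coe] at h1 ⊢
              simp only [← Multiset.cons_coe] at h1 ⊢
              rw [h1, Multiset.cons_swap b v, Multiset.cons_swap a v]
            · simp only [List.isChain_cons_cons]
              exact ⟨hch.1, hch.2.1, h2⟩
          · right
            simp [hb, hc]
            omega
    · simp only [List.length_cons] at hn
      rcases ih t.length (by omega) t b rfl hch.2 hb with ⟨t', h1, h2⟩ | h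
      · left
        refine ⟨b :: t', ?_, ?_⟩
        · rw [← Multiset.coe_eq_coe] at h1 ⊢
          simp only [← Multiset.cons_coe] at h1 ⊢
          rw [h1, Multiset.cons_swap a v]
        · simp only [List.isChain_cons_cons]
          exact ⟨hch.1, h2⟩
      · right
        simp [hb]
        omega

theorem HamPath.insert_or {G : SimpleGraph V} {S : Finset V} (h : HamPath G S)
    (hS : S.Nonempty) {v : V} (hv : v ∉ S) :
    HamPath G (insert v S) ∨ 2 * (S.filter (fun x => G.Adj v x)).card + 1 ≤ S.card := by
  obtain ⟨l, h1, h2, h3⟩ := h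
  have hl : l.toFinset = S := by ext; simp [h2]
  cases l with
  | nil =>
    exfalso
    rw [← hl] at hS
    simp at hS
  | cons a t =>
    have hvl : v ∉ a :: t := fun hh => hv ((h2 v).1 hh)
    have hnd : (v :: a :: t).Nodup := List.nodup_cons.2 ⟨hvl, h1⟩
    by_cases hva : G.Adj v a
    · left
      refine ⟨v :: a :: t, hnd, ?_, ?_⟩
      · intro x
        rw [List.mem_cons, h2, Finset.mem_insert]
      · rw [List.isChain_cons_cons]
        exact ⟨hva, h3⟩
    · rcases list_insert v t.length t a rfl h3 hva with ⟨t', hp, hch⟩ | h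
      · left
        refine ⟨a :: t', hp.nodup_iff.2 hnd, ?_, hch⟩
        intro x
        rw [hp.mem_iff, List.mem_cons, h2, Finset.mem_insert]
      · right
        have e1 : S.card = t.length + 1 := by
          rw [← hl, List.toFinset_card_of_nodup h1, List.length_cons]
        have e2 : (S.filter (fun x => G.Adj v x)).card ≤
            (t.filter (fun x => G.Adj v x)).length := by
          have : S.filter (fun x => G.Adj v x) ⊆ (t.filter (fun x => G.Adj v x)).toFinset := by
            intro x hx
            rw [Finset.mem_filter, ← h2, List.mem_cons] at hx
            rcases hx with ⟨rfl | hx, hx'⟩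
            · exact absurd hx' hva
            · simp [hx, hx']
          exact (Finset.card_le_card this).trans (List.toFinset_card_le _)
        omega

/-- The parameter that runs through the induction. -/
def Q (G : SimpleGraph V) (S : Finset V) (k : ℕ) : Prop :=
  (k = 2 ∧ HamPath G S) ∨ (3 ≤ k ∧ HasTree G S k)

theorem Q.hasTree {G : SimpleGraph V} {S : Finset V} {k : ℕ} (h : Q G S k)
    (hS : S.Nonempty) : HasTree G S k := by
  rcases h with ⟨rfl, h⟩ | ⟨-, h⟩
  · exact h.hasTree hS
  · exact h

theorem Q.two_le {G : SimpleGraph V} {S : Finset V} {k : ℕ} (h : Q G S k) : 2 ≤ k := by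
  rcases h with ⟨rfl, h⟩ | ⟨h, -⟩ <;> omega

theorem Q.succ {G : SimpleGraph V} {S : Finset V} {k : ℕ} (h : Q G S k) {u v : V}
    (hu : u ∈ S) (hv : v ∉ S) (huv : G.Adj u v) : Q G (insert v S) (k + 1) := by
  right
  have := h.two_le
  exact ⟨by omega, (h.hasTree ⟨u, hu⟩).succ hu hv huv⟩

theorem Q.insert_or {G : SimpleGraph V} {S : Finset V} {k : ℕ} (h : Q G S k)
    (hS : 2 ≤ S.card) {v : V} (hv : v ∉ S) :
    Q G (insert v S) k ∨ 2 * (S.filter (fun x => G.Adj v x)).card + 1 ≤ S.card := by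
  have hne : S.Nonempty := Finset.card_pos.1 (by omega)
  rcases h with ⟨rfl, h⟩ | ⟨hk, c, D, h⟩
  · rcases h.insert_or hne hv with h | h
    · exact Or.inl (Or.inl ⟨rfl, h⟩)
    · exact Or.inr h
  · by_cases hex : ∃ u ∈ S, G.Adj v u ∧ (D u).card < k
    · obtain ⟨u, hu, huv, hD⟩ := hex
      obtain ⟨α, hα2, hα⟩ : ∃ α ∈ Finset.range k, α ∉ D u := by
        apply Finset.exists_mem_notMem_of_card_lt_card
        simpa using hD
      exact Or.inl (Or.inr ⟨hk, _, _, h.attach hu hv huv.symm (Finset.mem_range.1 hα2) hα⟩)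
    · push Not at hex
      right
      have := h.count (X := S.filter (fun x => G.Adj v x)) hS hk (Finset.filter_subset _ _) (by
        intro x hx
        rw [Finset.mem_filter] at hx
        exact hex x hx.1 hx.2)
      omega

theorem Q.step {G : SimpleGraph V} {S : Finset V} {k l : ℕ} (h : Q G S k) (h' : Q Gᶜ S l)
    (hS : 2 ≤ S.card) {v : V} (hv : v ∉ S) : Q G (insert v S) k ∨ Q Gᶜ (insert v S) l := by
  rcases h.insert_or hS hv with h1 | h1
  · exact Or.inl h1
  rcases h'.insert_or hS hv with h2 | h2
  · exact Or.inr h2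
  exfalso
  have := Finset.card_filter_add_card_filter_not (s := S) (fun x => G.Adj v x)
  have e : (S.filter (fun x => ¬ G.Adj v x)).card ≤
      (@Finset.filter V (fun x => Gᶜ.Adj v x) (fun _ => Classical.propDecidable _) S).card := by
    apply Finset.card_le_card
    intro x hx
    simp only [Finset.mem_filter, SimpleGraph.compl_adj] at hx ⊢
    exact ⟨hx.1, fun hh => hv (hh ▸ hx.1), hx.2⟩
  omega

/-- `G[S]` is the double star `T(2, |S|-2)`: `o` is the big centre, `a` the small one and `b` the
leaf at `a`. -/
structure ES (G : SimpleGraph V) (S : Finset V) (o a b : V) : Prop where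
  ho : o ∈ S
  ha : a ∈ S
  hb : b ∈ S
  oa : G.Adj o a
  ab : G.Adj a b
  ob : ¬ G.Adj o b
  hob : o ≠ b
  ol : ∀ x ∈ S, x ≠ o → x ≠ a → x ≠ b → G.Adj o x
  al : ∀ x ∈ S, x ≠ o → x ≠ a → x ≠ b → ¬ G.Adj a x
  bl : ∀ x ∈ S, x ≠ o → x ≠ a → x ≠ b → ¬ G.Adj b x
  ll : ∀ x ∈ S, x ≠ o → x ≠ a → x ≠ b → ∀ y ∈ S, y ≠ o → y ≠ a → y ≠ b → ¬ G.Adj x y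

theorem base5 {G : SimpleGraph V} {a b c d v : V} (h : IsP4 G a b c d) (hva : v ≠ a)
    (hvb : v ≠ b) (hvc : v ≠ c) (hvd : v ≠ d)
    (hadj : G.Adj v a ∨ G.Adj v b ∨ G.Adj v c ∨ G.Adj v d) :
    HamPath G {v, a, b, c, d} ∨ ∃ o p q, ES G {v, a, b, c, d} o p q := by
  obtain ⟨h1, h2, h3, h4, h5, h6, h7, h8, h9⟩ := h
  have n1 := h1.ne
  have n2 := h2.ne
  have n3 := h3.ne
  have s1 : ¬ G.Adj c a := fun h => h4 h.symm
  have s2 : ¬ G.Adj d a := fun h => h5 h.symm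
  have s3 : ¬ G.Adj d b := fun h => h6 h.symm
  by_cases ea : G.Adj v a
  · left
    refine ⟨[v, a, b, c, d], by simp [*], by intro x; simp, by simp [*]⟩
  by_cases ed : G.Adj v d
  · left
    refine ⟨[a, b, c, d, v], by simp [*, hva.symm, hvb.symm, hvc.symm, hvd.symm],
      by intro x; simp; tauto, by simp [*, ed.symm]⟩
  have s4 : ¬ G.Adj a v := fun h => ea h.symm
  have s5 : ¬ G.Adj d v := fun h => ed h.symm
  by_cases eb : G.Adj v b
  · by_cases ec : G.Adj v c
    · left
      refine ⟨[a, b, v, c, d], by simp [*, hva.symm, hvb.symm],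
        by intro x; simp; tauto, by simp [*, eb.symm]⟩
    · right
      have s6 : ¬ G.Adj c v := fun h => ec h.symm
      refine ⟨b, c, d, by simp, by simp, by simp, h2, h3, h6, h9, ?_, ?_, ?_, ?_⟩ <;>
      simp [*, h1.symm, eb.symm]
  · by_cases ec : G.Adj v c
    · right
      have s6 : ¬ G.Adj b v := fun h => eb h.symm
      refine ⟨c, b, a, by simp, by simp, by simp, h2.symm, h1.symm, fun h => h4 h.symm,
        h7.symm, ?_, ?_, ?_, ?_⟩ <;>
      simp [*, h1.symm, ec.symm]
    · tauto

theorem chain_clique {R : V → V → Prop} {y : V} {t : List V} : ∀ (M : List V) (x : V),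
    (∀ z ∈ M, R x z) → (∀ z ∈ M, R z y) → M.Pairwise R → R x y → (y :: t).IsChain R →
    (x :: (M ++ y :: t)).IsChain R := by
  intro M
  induction M with
  | nil =>
    intro x _ _ _ h1 h2
    simpa using ⟨h1, h2⟩
  | cons z M ih =>
    intro x h1 h2 h3 h4 h5
    rw [List.pairwise_cons] at h3
    rw [List.cons_append, List.isChain_cons_cons]
    exact ⟨h1 z (by simp), ih z h3.1 (fun w hw => h2 w (by simp [hw])) h3.2 (h2 z (by simp)) h5⟩

theorem ES.chain {G : SimpleGraph V} {S W : Finset V} {o a b l : V} {t : List V}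
    (h : ES G S o a b)
    (hl : l ∈ S) (hlo : l ≠ o) (hla : l ≠ a) (hlb : l ≠ b)
    (hW : ∀ x ∈ W, x ∈ S ∧ x ≠ o ∧ x ≠ a ∧ x ≠ b ∧ x ≠ l) (ht : (a :: t).IsChain Gᶜ.Adj) :
    (o :: b :: (W.toList ++ l :: a :: t)).IsChain Gᶜ.Adj := by
  rw [List.isChain_cons_cons]
  refine ⟨⟨h.hob, h.ob⟩, chain_clique _ _ ?_ ?_ ?_ ?_ ?_⟩
  · intro z hz
    obtain ⟨h1, h2, h3, h4, h5⟩ := hW z (by simpa using hz)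
    exact ⟨h4.symm, h.bl z h1 h2 h3 h4⟩
  · intro z hz
    obtain ⟨h1, h2, h3, h4, h5⟩ := hW z (by simpa using hz)
    exact ⟨h5, h.ll z h1 h2 h3 h4 l hl hlo hla hlb⟩
  · have := W.nodup_toList
    apply List.Pairwise.imp_of_mem _ this
    intro z w hz hw hzw
    obtain ⟨h1, h2, h3, h4, h5⟩ := hW z (by simpa using hz)
    obtain ⟨k1, k2, k3, k4, k5⟩ := hW w (by simpa using hw)
    exact ⟨hzw, h.ll z h1 h2 h3 h4 w k1 k2 k3 k4⟩
  · exact ⟨hlb.symm, h.bl l hl hlo hla hlb⟩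
  · rw [List.isChain_cons_cons]
    exact ⟨⟨hla, fun hh => h.al l hl hlo hla hlb hh.symm⟩, ht⟩

theorem ES.exists_leaf {G : SimpleGraph V} {S : Finset V} {o a b : V} (_h : ES G S o a b)
    (w : V) (hS : 5 ≤ S.card) : ∃ l ∈ S, l ≠ o ∧ l ≠ a ∧ l ≠ b ∧ l ≠ w := by
  obtain ⟨l, hl, hl'⟩ : ∃ l ∈ S, l ∉ ({o, a, b, w} : Finset V) := by
    apply Finset.exists_mem_notMem_of_card_lt_card
    have := Finset.card_le_four (a := o) (b := a) (c := b) (d := w)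
    omega
  simp at hl'
  exact ⟨l, hl, by tauto⟩

theorem ES.hamPath {G : SimpleGraph V} {S : Finset V} {o a b : V} (h : ES G S o a b)
    (hS : 5 ≤ S.card) : HamPath Gᶜ S := by
  obtain ⟨l, hl, hlo, hla, hlb, -⟩ := h.exists_leaf o hS
  refine ⟨o :: b :: ((S \ {o, a, b, l}).toList ++ l :: a :: []), ?_, ?_,
    h.chain hl hlo hla hlb ?_ (by simp)⟩
  · have := h.oa.ne
    have := h.ab.ne'
    have := h.hob
    simp [List.nodup_append, Finset.nodup_toList]
    grind
  · intro x
    have := h.ho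
    have := h.ha
    have := h.hb
    simp
    grind
  · intro x hx
    simp at hx
    tauto

/-- Adding a vertex to the complement of a double star. -/
theorem ES.hamPath_insert {G : SimpleGraph V} {S : Finset V} {o a b v w : V} (h : ES G S o a b)
    (hS : 5 ≤ S.card) (hv : v ∉ S) (hw : w ∈ S) (hvw : ¬ G.Adj v w) (hwb : w ≠ b) :
    HamPath Gᶜ (insert v S) := by
  have n1 := h.oa.ne
  have n2 := h.ab.ne'
  have n3 := h.hob
  have m1 := h.ho
  have m2 := h.ha
  have m3 := h.hb
  have hvw' : Gᶜ.Adj v w := ⟨fun hh => hv (hh ▸ hw), hvw⟩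
  obtain ⟨l, hl, hlo, hla, hlb, hlw⟩ := h.exists_leaf w hS
  by_cases hwo : w = o
  · subst hwo
    refine ⟨v :: w :: b :: ((S \ {w, a, b, l}).toList ++ l :: a :: []), ?_, ?_, ?_⟩
    · simp [List.nodup_append, Finset.nodup_toList]
      grind
    · intro x
      simp
      grind
    · rw [List.isChain_cons_cons]
      refine ⟨hvw', h.chain hl hlo hla hlb ?_ (by simp)⟩
      intro x hx
      simp at hx
      tauto
  by_cases hwa : w = a
  · subst hwa
    refine ⟨o :: b :: ((S \ {o, w, b, l}).toList ++ l :: w :: [v]), ?_, ?_,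
      h.chain hl hlo hla hlb ?_ (by simpa using ⟨hvw'.ne', fun hh => hvw hh.symm⟩)⟩
    · simp [List.nodup_append, Finset.nodup_toList]
      grind
    · intro x
      simp
      grind
    · intro x hx
      simp at hx
      tauto
  · refine ⟨o :: b :: ((S \ {o, a, b, l, w}).toList ++ l :: a :: [w, v]), ?_, ?_,
      h.chain hl hlo hla hlb ?_ ?_⟩
    · simp [List.nodup_append, Finset.nodup_toList]
      grind
    · intro x
      simp
      grind
    · intro x hx
      simp at hx
      tauto
    · simp only [List.isChain_cons_cons, List.isChain_singleton, and_true]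
      exact ⟨⟨fun hh => hwa hh.symm, h.al w hw hwo hwa hwb⟩, hvw'.symm⟩

theorem tree_of_list_grow {G : SimpleGraph V} {T : Finset V} (hT : ConnOn G T) (l : List V)
    (hne : l ≠ []) (hnd : l.Nodup) (hch : l.IsChain G.Adj) (hsub : ∀ x ∈ l, x ∈ T) (k : ℕ)
    (hk : 2 + T.card = k + l.length) : HasTree G T k := by
  have hc : l.toFinset.card = l.length := List.toFinset_card_of_nodup hnd
  have hs : l.toFinset ⊆ T := by
    intro x hx
    exact hsub x (by simpa using hx)
  have hle := Finset.card_le_card hs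
  have hn : l.toFinset.Nonempty := by
    rw [List.toFinset_nonempty_iff]; exact hne
  have h1 : HasTree G l.toFinset 2 := HamPath.hasTree ⟨l, hnd, by simp, hch⟩ hn
  have := HasTree.grow hT (T.card - l.length) 2 l.toFinset hs hn (by omega) h1
  rwa [show 2 + (T.card - l.length) = k by omega] at this

theorem ES.hasTree {G : SimpleGraph V} {S : Finset V} {o a b : V} (h : ES G S o a b)
    (hS : 5 ≤ S.card) (hc : ConnOn G S) : HasTree G S (S.card - 2) := by
  obtain ⟨l, hl, hlo, hla, hlb, -⟩ := h.exists_leaf o hS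
  have n1 := h.oa.ne'
  have n2 := h.ab.ne'
  have n3 := h.hob.symm
  refine tree_of_list_grow hc [b, a, o, l] (by simp) ?_ ?_ ?_ _ ?_
  · simp [*, hlb.symm, hla.symm, hlo.symm]
  · simp [h.ab.symm, h.oa.symm, h.ol l hl hlo hla hlb]
  · simp [h.ho, h.ha, h.hb, hl]
  · simp; omega

/-- One step of the induction starting from a double star. -/
theorem ES.step {G : SimpleGraph V} {S : Finset V} {o a b v : V} (h : ES G S o a b)
    (hS : 5 ≤ S.card) (hv : v ∉ S) (hc : ConnOn G (insert v S)) (hc' : ConnOn Gᶜ (insert v S)) :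
    (∃ o a b, ES G (insert v S) o a b) ∨
      ∃ k l, Q G (insert v S) k ∧ Q Gᶜ (insert v S) l ∧ k + l ≤ S.card := by
  have n1 := h.oa.ne'
  have n2 := h.ab.ne'
  have n3 := h.hob.symm
  have m1 := h.ho
  have m2 := h.ha
  have m3 := h.hb
  have hvo : v ≠ o := fun hh => hv (hh ▸ m1)
  have hva : v ≠ a := fun hh => hv (hh ▸ m2)
  have hvb : v ≠ b := fun hh => hv (hh ▸ m3)
  have hcard : (insert v S).card = S.card + 1 := Finset.card_insert_of_notMem hv
  obtain ⟨l, hl, hlo, hla, hlb, -⟩ := h.exists_leaf o hS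
  have hvl : v ≠ l := fun hh => hv (hh ▸ hl)
  have hol := h.ol l hl hlo hla hlb
  by_cases hbad : ∀ w ∈ S, w ≠ b → G.Adj v w
  · right
    obtain ⟨l', hl', hlo', hla', hlb', hll'⟩ := h.exists_leaf l hS
    have hvl' : v ≠ l' := fun hh => hv (hh ▸ hl')
    have hol' := h.ol l' hl' hlo' hla' hlb'
    have nd : [b, a, v, l, o, l'].Nodup := by
      simp; grind
    have ch : [b, a, v, l, o, l'].IsChain G.Adj := by
      simp [h.ab.symm, (hbad a m2 n2.symm).symm, hbad l hl hlb, hol.symm, hol']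
    have hvb' : Gᶜ.Adj b v := by
      refine ⟨hvb.symm, ?_⟩
      intro hbv
      obtain ⟨y, hy, hyv, hvy⟩ := hc'.exists_adj (v := v) (by simp) (by omega)
      rcases Finset.mem_insert.1 hy with hy | hy
      · exact hyv hy
      · by_cases hyb : y = b
        · subst hyb; exact hvy.2 hbv.symm
        · exact hvy.2 (hbad y hy hyb)
    have q2 : Q Gᶜ (insert v S) 3 := Q.succ (Or.inl ⟨rfl, h.hamPath hS⟩) m3 hv hvb'
    have sub : ∀ x ∈ [b, a, v, l, o, l'], x ∈ insert v S := by
      simp [*]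
    have q1 : Q G (insert v S) (S.card - 3) := by
      by_cases h5 : S.card = 5
      · left
        refine ⟨by omega, _, nd, ?_, ch⟩
        have hs : [b, a, v, l, o, l'].toFinset = insert v S := by
          apply Finset.eq_of_subset_of_card_le
          · intro x hx
            exact sub x (by simpa using hx)
          · rw [List.toFinset_card_of_nodup nd, hcard, h5]
            simp
        intro x
        rw [← hs, List.mem_toFinset]
      · right
        refine ⟨by omega, tree_of_list_grow hc _ (by simp) nd ch sub _ ?_⟩
        simp; omega
    exact ⟨_, _, q1, q2, by omega⟩
  · push Not at hbad
    obtain ⟨w, hw, hwb, hvw⟩ := hbad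
    have q2 : Q Gᶜ (insert v S) 2 := Or.inl ⟨rfl, h.hamPath_insert hS hv hw hvw hwb⟩
    by_cases hstar : ∀ u ∈ S, u ≠ o → ¬ G.Adj v u
    · left
      have hvo' : G.Adj o v := by
        obtain ⟨y, hy, hyv, hvy⟩ := hc.exists_adj (v := v) (by simp) (by omega)
        rcases Finset.mem_insert.1 hy with hy | hy
        · exact absurd hy hyv
        · by_cases hyo : y = o
          · subst hyo; exact hvy.symm
          · exact absurd hvy (hstar y hy hyo)
      refine ⟨o, a, b, by simp [m1], by simp [m2], by simp [m3], h.oa, h.ab, h.ob, h.hob,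
        ?_, ?_, ?_, ?_⟩
      · intro x hx
        rcases Finset.mem_insert.1 hx with rfl | hx
        · intros; exact hvo'
        · exact h.ol x hx
      · intro x hx
        rcases Finset.mem_insert.1 hx with rfl | hx
        · intros; exact fun hh => hstar a m2 n1 hh.symm
        · exact h.al x hx
      · intro x hx
        rcases Finset.mem_insert.1 hx with rfl | hx
        · intros; exact fun hh => hstar b m3 n3 hh.symm
        · exact h.bl x hx
      · intro x hx x1 x2 x3 y hy y1 y2 y3
        rcases Finset.mem_insert.1 hx with rfl | hx'
        · rcases Finset.mem_insert.1 hy with rfl | hy'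
          · exact G.loopless.irrefl _
          · exact hstar y hy' y1
        · rcases Finset.mem_insert.1 hy with rfl | hy'
          · exact fun hh => hstar x hx' x1 hh.symm
          · exact h.ll x hx' x1 x2 x3 y hy' y1 y2 y3
    · right
      push Not at hstar
      obtain ⟨u, hu, huo, hvu⟩ := hstar
      refine ⟨S.card - 2, 2, Or.inr ⟨by omega, ?_⟩, q2, by omega⟩
      have hvS : v ∈ insert v S := by simp
      by_cases hub : u = b
      · subst hub
        refine tree_of_list_grow hc [v, u, a, o, l] (by simp) ?_ ?_ ?_ _ ?_
        · simp; grind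
        · simp [hvu, h.ab.symm, h.oa.symm, hol]
        · simp [*]
        · simp; omega
      by_cases hua : u = a
      · subst hua
        obtain ⟨l', hl', hlo', hla', hlb', hll'⟩ := h.exists_leaf l hS
        have hvl' : v ≠ l' := fun hh => hv (hh ▸ hl')
        have hol' := h.ol l' hl' hlo' hla' hlb'
        have nd : [b, u, o, l].Nodup := by simp; grind
        have t0 : HasTree G [b, u, o, l].toFinset 2 :=
          HamPath.hasTree ⟨[b, u, o, l], nd, by simp,
            by simp [h.ab.symm, h.oa.symm, hol]⟩ (by simp)
        have t1 := t0.succ₂ (u := u) (v := v) (u' := o) (v' := l') (by simp)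
          (by simp; grind) hvu.symm (by simp) (by simp; grind) hol' huo hvl'
        have hcd : (insert l' (insert v [b, u, o, l].toFinset)).card = 6 := by
          rw [Finset.card_insert_of_notMem, Finset.card_insert_of_notMem,
            List.toFinset_card_of_nodup nd]
          · simp
          · simp; grind
          · simp; grind
        have hsub : insert l' (insert v [b, u, o, l].toFinset) ⊆ insert v S := by
          intro x hx
          simp at hx ⊢
          grind
        have hle := Finset.card_le_card hsub
        have := HasTree.grow hc (S.card - 5) _ _ hsub (by simp) (by omega) t1
        rwa [show 2 + 1 + (S.card - 5) = S.card - 2 by omega] at this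
      · refine tree_of_list_grow hc [b, a, o, u, v] (by simp) ?_ ?_ ?_ _ ?_
        · simp; grind
        · simp [hvu.symm, h.ab.symm, h.oa.symm, h.ol u hu huo hua hub]
        · simp [*]
        · simp; omega

theorem main_induction {G : SimpleGraph V} : ∀ (m : ℕ) (S : Finset V), S.card = m → 5 ≤ m →
    ConnOn G S → ConnOn Gᶜ S →
    (∃ o a b, ES G S o a b) ∨ (∃ o a b, ES Gᶜ S o a b) ∨
      ∃ k l, Q G S k ∧ Q Gᶜ S l ∧ k + l + 1 ≤ m := by
  intro m
  induction m with
  | zero => intro S _ h; omega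
  | succ m ih =>
    intro S hS hm hc hc'
    by_cases hm5 : m = 4
    · obtain ⟨a, ha, b, hb, c, hcS, d, hd, hp⟩ := exists_P4 S.card S rfl (by omega) hc hc'
      obtain ⟨v, hv, hv'⟩ : ∃ l ∈ S, l ∉ ({a, b, c, d} : Finset V) := by
        apply Finset.exists_mem_notMem_of_card_lt_card
        have := Finset.card_le_four (a := a) (b := b) (c := c) (d := d)
        omega
      have n1 := hp.1.ne
      have n2 := hp.2.1.ne
      have n3 := hp.2.2.1.ne
      obtain ⟨n4, n5, n6⟩ := hp.2.2.2.2.2.2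
      simp at hv'
      obtain ⟨v1, v2, v3, v4⟩ := hv'
      have hSeq : S = {v, a, b, c, d} := by
        symm
        apply Finset.eq_of_subset_of_card_le
        · intro x hx
          simp at hx
          grind
        · have : ({v, a, b, c, d} : Finset V) = [v, a, b, c, d].toFinset := by simp
          rw [this, List.toFinset_card_of_nodup (by simp; grind)]
          simp; omega
      have hSeq' : S = {v, b, d, a, c} := by
        rw [hSeq]; ext; simp; tauto
      obtain ⟨y, hy, hyv, hvy⟩ := hc.exists_adj hv (by omega)
      obtain ⟨z, hz, hzv, hvz⟩ := hc'.exists_adj hv (by omega)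
      have e1 := base5 hp v1 v2 v3 v4 (by
        rw [hSeq] at hy
        simp at hy
        rcases hy with rfl | rfl | rfl | rfl | rfl <;> simp_all)
      have e2 := base5 hp.compl v2 v4 v1 v3 (by
        rw [hSeq] at hz
        simp only [Finset.mem_insert, Finset.mem_singleton] at hz
        rcases hz with rfl | rfl | rfl | rfl | rfl
        · exact absurd rfl hzv
        all_goals tauto)
      rw [← hSeq] at e1
      rw [← hSeq'] at e2
      rcases e1 with e1 | e1
      · rcases e2 with e2 | e2
        · right; right
          exact ⟨2, 2, Or.inl ⟨rfl, e1⟩, Or.inl ⟨rfl, e2⟩, by omega⟩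
        · right; left; exact e2
      · left; exact e1
    · obtain ⟨v, hv, h1, h2⟩ := exists_removable (by omega) hc hc'
      have hcard : (S.erase v).card = m := by rw [Finset.card_erase_of_mem hv]; omega
      have hvn : v ∉ S.erase v := by simp
      have hSi : insert v (S.erase v) = S := Finset.insert_erase hv
      rcases ih (S.erase v) hcard (by omega) h1 h2 with ⟨o, a, b, h⟩ | ⟨o, a, b, h⟩ | h
      · have := h.step (by omega) hvn (by rwa [hSi]) (by rwa [hSi])
        rw [hSi] at this
        rcases this with h | ⟨k, l, q1, q2, hkl⟩
        · left; exact h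
        · right; right; exact ⟨k, l, q1, q2, by omega⟩
      · have := h.step (by omega) hvn (by rwa [hSi]) (by rwa [hSi, compl_compl])
        rw [hSi, compl_compl] at this
        rcases this with h | ⟨k, l, q1, q2, hkl⟩
        · right; left; exact h
        · right; right; exact ⟨l, k, q2, q1, by omega⟩
      · obtain ⟨k, l, q1, q2, hkl⟩ := h
        right; right
        obtain ⟨y, hy, hyv, hvy⟩ := hc.exists_adj hv (by omega)
        obtain ⟨z, hz, hzv, hvz⟩ := hc'.exists_adj hv (by omega)
        have r1 := q1.succ (Finset.mem_erase.2 ⟨hyv, hy⟩) hvn hvy.symm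
        have r2 := q2.succ (Finset.mem_erase.2 ⟨hzv, hz⟩) hvn hvz.symm
        have st := q1.step q2 (by omega) hvn
        rw [hSi] at r1 r2 st
        rcases st with st | st
        · exact ⟨k, l + 1, st, r2, by omega⟩
        · exact ⟨k + 1, l, r1, st, by omega⟩

theorem coloring_of_hasTree [Fintype V] {G : SimpleGraph V} {k : ℕ}
    (h : HasTree G Finset.univ k) (hk : 0 < k) :
    ∃ c : Sym2 V → Fin k, IsProperPathColoring G c := by
  obtain ⟨c, D, h⟩ := h
  refine ⟨fun e => if he : c e < k then ⟨c e, he⟩ else ⟨0, hk⟩, ?_⟩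
  intro u v _
  obtain ⟨p, h1, -, h3, h4⟩ := h.link u (Finset.mem_univ _) v (Finset.mem_univ _)
  refine ⟨p, h1, ?_⟩
  have hlt : ∀ e ∈ p.edges, c e < k := by
    intro e he
    induction e with
    | _ x y => exact Finset.mem_range.1 (h.range x (h4 _ he x (by simp)))
  have : (p.edges.map c) = (p.edges.map
      (fun e => if he : c e < k then (⟨c e, he⟩ : Fin k) else ⟨0, hk⟩)).map Fin.val := by
    rw [List.map_map]
    apply List.map_congr_left
    intro e he
    simp [hlt e he]
  rw [this, List.isChain_map] at h3
  exact h3.imp (fun a b hab hh => hab (by rw [hh]))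

theorem pc_le_of_hasTree [Fintype V] {G : SimpleGraph V} {k : ℕ}
    (h : HasTree G Finset.univ k) (hk : 0 < k) : pc G ≤ k :=
  Nat.sInf_le (coloring_of_hasTree h hk)

theorem pc_spec [Fintype V] {G : SimpleGraph V} {k : ℕ}
    (h : HasTree G Finset.univ k) (hk : 0 < k) :
    ∃ c : Sym2 V → Fin (pc G), IsProperPathColoring G c :=
  Nat.sInf_mem (s := {k : ℕ | ∃ c : Sym2 V → Fin k, IsProperPathColoring G c})
    ⟨k, coloring_of_hasTree h hk⟩

theorem two_le_of_coloring {G : SimpleGraph V} {k : ℕ} {c : Sym2 V → Fin k}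
    (h : IsProperPathColoring G c) {u v : V} (huv : u ≠ v) (hn : ¬ G.Adj u v) : 2 ≤ k := by
  obtain ⟨p, -, h2⟩ := h u v huv
  cases p with
  | nil => exact absurd rfl huv
  | cons h1 q =>
    cases q with
    | nil => exact absurd h1 hn
    | cons h3 r =>
      by_contra hk
      have : Subsingleton (Fin k) := by
        rw [Fin.subsingleton_iff_le_one]; omega
      have h2' : List.IsChain (· ≠ ·) _ := h2
      simp only [SimpleGraph.Walk.edges_cons, List.map_cons, List.isChain_cons_cons] at h2'
      exact h2'.1 (Subsingleton.elim _ _)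

theorem ES.leaf_adj [Fintype V] {G : SimpleGraph V} {o a b x z : V}
    (h : ES G Finset.univ o a b) (ho : x ≠ o) (ha : x ≠ a) (hb : x ≠ b) (hxz : G.Adj x z) :
    z = o := by
  by_contra hzo
  have m := fun y : V => Finset.mem_univ y
  by_cases hza : z = a
  · subst hza; exact h.al x (m x) ho ha hb hxz.symm
  by_cases hzb : z = b
  · subst hzb; exact h.bl x (m x) ho ha hb hxz.symm
  exact h.ll x (m x) ho ha hb z (m z) hzo hza hzb hxz

theorem ES.leaf_walk [Fintype V] {G : SimpleGraph V} {o a b x z : V}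
    (h : ES G Finset.univ o a b) (ho : x ≠ o) (ha : x ≠ a) (hb : x ≠ b) (hxz : x ≠ z)
    (p : G.Walk x z) : o ∈ p.support := by
  cases p with
  | nil => exact absurd rfl hxz
  | cons h1 q =>
    have := h.leaf_adj ho ha hb h1
    subst this
    simp

theorem ES.color_ne [Fintype V] {G : SimpleGraph V} {o a b x y : V}
    (h : ES G Finset.univ o a b) {k : ℕ} {c : Sym2 V → Fin k} (hcol : IsProperPathColoring G c)
    (ho : x ≠ o) (ha : x ≠ a) (hb : x ≠ b) (hyx : x ≠ y) (hyo : y ≠ o) (hyb : y ≠ b) :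
    c s(o, x) ≠ c s(o, y) := by
  obtain ⟨p, h1, h2⟩ := hcol x y hyx
  replace h2 : List.IsChain (· ≠ ·) (p.edges.map c) := h2
  cases p with
  | nil => exact absurd rfl hyx
  | cons hxz q =>
    have := h.leaf_adj ho ha hb hxz
    subst this
    cases q with
    | nil => exact absurd rfl hyo
    | @cons _ z _ hoz r =>
      by_cases hzy : z = y
      · subst hzy
        simp only [SimpleGraph.Walk.edges_cons, List.map_cons, List.isChain_cons_cons] at h2
        rw [Sym2.eq_swap]
        exact h2.1
      · exfalso
        rw [SimpleGraph.Walk.cons_isPath_iff, SimpleGraph.Walk.cons_isPath_iff] at h1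
        have hzb : z ≠ b := by rintro rfl; exact h.ob hoz
        by_cases hza : z = a
        · apply h1.1.2
          have := h.leaf_walk hyo (fun hh => hzy (hza.trans hh.symm)) hyb (fun hh => hzy hh.symm)
            r.reverse
          simpa using this
        · exact h1.1.2 (h.leaf_walk hoz.ne' hza hzb hzy r)

theorem ES.le_of_coloring [Fintype V] {G : SimpleGraph V} {o a b : V}
    (h : ES G Finset.univ o a b) {k : ℕ} {c : Sym2 V → Fin k} (hcol : IsProperPathColoring G c) :
    Fintype.card V ≤ k + 2 := by
  have hinj : Set.InjOn (fun x => c s(o, x)) ((Finset.univ \ {o, b} : Finset V) : Set V) := by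
    intro x hx y hy hxy
    simp at hx hy
    by_contra hne
    by_cases hxa : x = a
    · exact h.color_ne hcol hy.1 (fun hh => hne (hxa.trans hh.symm)) hy.2 (fun hh => hne hh.symm)
        hx.1 hx.2 hxy.symm
    · exact h.color_ne hcol hx.1 hxa hx.2 hne hy.1 hy.2 hxy
  have h1 := Finset.card_le_card_of_injOn (t := Finset.univ) (fun x => c s(o, x))
    (fun _ _ => Finset.mem_univ _) hinj
  rw [Finset.card_sdiff_of_subset (Finset.subset_univ _), Finset.card_pair h.hob] at h1
  simp at h1
  omega

theorem ES.pc_add [Fintype V] {G : SimpleGraph V} {o a b : V}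
    (h : ES G Finset.univ o a b) (h5 : 5 ≤ Fintype.card V) (hG : G.Connected) :
    pc G + pc Gᶜ = Fintype.card V := by
  have hu : (Finset.univ : Finset V).card = Fintype.card V := Finset.card_univ
  have t1 := h.hasTree (by omega) (connOn_univ hG)
  have t2 := (h.hamPath (by omega)).hasTree ⟨o, Finset.mem_univ _⟩
  have u1 := pc_le_of_hasTree t1 (by omega)
  have u2 := pc_le_of_hasTree t2 (by omega)
  obtain ⟨c1, k1⟩ := pc_spec t1 (by omega)
  obtain ⟨c2, k2⟩ := pc_spec t2 (by omega)
  have l1 := h.le_of_coloring k1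
  have l2 := two_le_of_coloring k2 h.oa.ne (fun hh => hh.2 h.oa)
  omega

theorem ES.of_iso [Fintype V] {G : SimpleGraph V} {n : ℕ} (h5 : 5 ≤ n)
    (e : G ≃g doubleStarT2 n) : ∃ o a b, ES G Finset.univ o a b := by
  have hadj : ∀ x y, G.Adj x y ↔ (doubleStarT2 n).Adj (e x) (e y) :=
    fun x y => e.map_adj_iff.symm
  have hs : ∀ i : Fin n, e (e.symm i) = i := fun i => e.toEquiv.apply_symm_apply i
  have key : ∀ x (i : Fin n), x ≠ e.symm i → (e x).val ≠ i.val := by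
    intro x i hx hh
    apply hx
    rw [← Fin.ext hh]
    simp
  refine ⟨e.symm ⟨0, by omega⟩, e.symm ⟨1, by omega⟩, e.symm ⟨2, by omega⟩, by simp, by simp,
    by simp, ?_, ?_, ?_, ?_, ?_, ?_, ?_, ?_⟩
  · rw [hadj, hs, hs]; simp [doubleStarT2]
  · rw [hadj, hs, hs]; simp [doubleStarT2]
  · rw [hadj, hs, hs]; simp [doubleStarT2]
  · simp
  · intro x _ h0 h1 h2
    replace h0 := key _ _ h0
    replace h1 := key _ _ h1
    replace h2 := key _ _ h2
    rw [hadj, hs]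
    simp only [doubleStarT2, SimpleGraph.fromRel_adj, ne_eq, Fin.ext_iff] at h0 h1 h2 ⊢
    exact ⟨by omega, Or.inl (Or.inr (Or.inr ⟨by trivial, by omega⟩))⟩
  · intro x _ h0 h1 h2
    replace h0 := key _ _ h0
    replace h1 := key _ _ h1
    replace h2 := key _ _ h2
    rw [hadj, hs]
    simp only [doubleStarT2, SimpleGraph.fromRel_adj, ne_eq, Fin.ext_iff] at h0 h1 h2 ⊢
    omega
  · intro x _ h0 h1 h2
    replace h0 := key _ _ h0
    replace h1 := key _ _ h1
    replace h2 := key _ _ h2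
    rw [hadj, hs]
    simp only [doubleStarT2, SimpleGraph.fromRel_adj, ne_eq, Fin.ext_iff] at h0 h1 h2 ⊢
    omega
  · intro x _ h0 h1 h2 y _ k0 k1 k2
    replace h0 := key _ _ h0
    replace h1 := key _ _ h1
    replace h2 := key _ _ h2
    replace k0 := key _ _ k0
    replace k1 := key _ _ k1
    replace k2 := key _ _ k2
    rw [hadj]
    simp only [doubleStarT2, SimpleGraph.fromRel_adj, ne_eq, Fin.ext_iff] at h0 h1 h2 k0 k1 k2 ⊢
    omega

theorem ES.iso [Fintype V] {G : SimpleGraph V} {n : ℕ} {o a b : V} (h5 : 5 ≤ n)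
    (hn : Fintype.card V = n) (h : ES G Finset.univ o a b) :
    Nonempty (G ≃g doubleStarT2 n) := by
  have n1 := h.oa.ne'
  have n2 := h.ab.ne'
  have n3 := h.hob.symm
  obtain ⟨e, e0, e1, e2⟩ : ∃ e : V ≃ Fin n, e o = ⟨0, by omega⟩ ∧ e a = ⟨1, by omega⟩ ∧
      e b = ⟨2, by omega⟩ := by
    let f := Fintype.equivFinOfCardEq hn
    let f1 := f.trans (Equiv.swap (f o) ⟨0, by omega⟩)
    have hf1 : f1 o = ⟨0, by omega⟩ := by simp [f1]
    let f2 := f1.trans (Equiv.swap (f1 a) ⟨1, by omega⟩)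
    have hf2a : f2 a = ⟨1, by omega⟩ := by simp [f2]
    have hf2o : f2 o = ⟨0, by omega⟩ := by
      show Equiv.swap (f1 a) ⟨1, by omega⟩ (f1 o) = _
      rw [Equiv.swap_apply_of_ne_of_ne, hf1]
      · exact fun hh => n1 (f1.injective hh).symm
      · rw [hf1]; simp
    refine ⟨f2.trans (Equiv.swap (f2 b) ⟨2, by omega⟩), ?_, ?_, ?_⟩
    · show Equiv.swap (f2 b) ⟨2, by omega⟩ (f2 o) = _
      rw [Equiv.swap_apply_of_ne_of_ne, hf2o]
      · exact fun hh => n3 (f2.injective hh).symm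
      · rw [hf2o]; simp
    · show Equiv.swap (f2 b) ⟨2, by omega⟩ (f2 a) = _
      rw [Equiv.swap_apply_of_ne_of_ne, hf2a]
      · exact fun hh => n2 (f2.injective hh).symm
      · rw [hf2a]; simp
    · simp
  have key : ∀ x y, (e x).val = (e y).val ↔ x = y := by
    intro x y
    rw [← Fin.ext_iff, e.apply_eq_iff_eq]
  have k0 : ∀ x, (e x).val = 0 ↔ x = o := by intro x; rw [← key x o, e0]
  have k1 : ∀ x, (e x).val = 1 ↔ x = a := by intro x; rw [← key x a, e1]
  have k2 : ∀ x, (e x).val = 2 ↔ x = b := by intro x; rw [← key x b, e2]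
  have k3 : ∀ x, 3 ≤ (e x).val ↔ x ≠ o ∧ x ≠ a ∧ x ≠ b := by
    intro x
    rw [ne_eq, ne_eq, ne_eq, ← k0, ← k1, ← k2]
    omega
  refine ⟨⟨e, ?_⟩⟩
  intro x y
  simp only [doubleStarT2, SimpleGraph.fromRel_adj, k0, k1, k2, k3, ne_eq, e.apply_eq_iff_eq]
  have m := fun y : V => Finset.mem_univ y
  have lf := fun x z ho ha hb => h.leaf_adj (x := x) (z := z) ho ha hb
  constructor
  · rintro ⟨-, ((⟨rfl, rfl⟩ | ⟨rfl, rfl⟩ | ⟨rfl, h1, h2, h3⟩) |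
      (⟨rfl, rfl⟩ | ⟨rfl, rfl⟩ | ⟨rfl, h1, h2, h3⟩))⟩
    · exact h.oa
    · exact h.ab
    · exact h.ol y (m y) h1 h2 h3
    · exact h.oa.symm
    · exact h.ab.symm
    · exact (h.ol x (m x) h1 h2 h3).symm
  · intro hxy
    refine ⟨hxy.ne, ?_⟩
    have hne := hxy.ne
    by_cases hx : x ≠ o ∧ x ≠ a ∧ x ≠ b
    · have := lf x y hx.1 hx.2.1 hx.2.2 hxy
      tauto
    by_cases hy : y ≠ o ∧ y ≠ a ∧ y ≠ b
    · have := lf y x hy.1 hy.2.1 hy.2.2 hxy.symm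
      tauto
    have hob := h.ob
    have hob' : ¬ G.Adj b o := fun hh => hob hh.symm
    have ex : x = o ∨ x = a ∨ x = b := by tauto
    have ey : y = o ∨ y = a ∨ y = b := by tauto
    rcases ex with rfl | rfl | rfl <;> rcases ey with rfl | rfl | rfl <;> simp_all

end NG

/-- Nordhaus-Gaddum upper bound: if `G` and `Gᶜ` are both connected on `n ≥ 5` vertices,
then `pc G + pc Gᶜ ≤ n`, with equality iff `G ≅ T(2, n-2)` or `Gᶜ ≅ T(2, n-2)`. -/
theorem nordhaus_gaddum_upper {V : Type*} [Fintype V] (G : SimpleGraph V) (n : ℕ)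
    (hn : Fintype.card V = n) (h5 : 5 ≤ n) (hG : G.Connected) (hGc : Gᶜ.Connected) :
    pc G + pc Gᶜ ≤ n ∧
      (pc G + pc Gᶜ = n ↔
        Nonempty (G ≃g doubleStarT2 n) ∨ Nonempty (Gᶜ ≃g doubleStarT2 n)) := by
  classical
  subst hn
  have c1 := connOn_univ hG
  have c2 := connOn_univ hGc
  have hu : (Finset.univ : Finset V).card = Fintype.card V := Finset.card_univ
  have hne : (Finset.univ : Finset V).Nonempty := Finset.card_pos.1 (by omega)
  have back : Nonempty (G ≃g doubleStarT2 (Fintype.card V)) ∨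
      Nonempty (Gᶜ ≃g doubleStarT2 (Fintype.card V)) → pc G + pc Gᶜ = Fintype.card V := by
    rintro (⟨⟨e⟩⟩ | ⟨⟨e⟩⟩)
    · obtain ⟨o, a, b, h⟩ := ES.of_iso h5 e
      exact h.pc_add h5 hG
    · obtain ⟨o, a, b, h⟩ := ES.of_iso h5 e
      have := h.pc_add h5 hGc
      rw [compl_compl] at this
      omega
  have fwd : (Nonempty (G ≃g doubleStarT2 (Fintype.card V)) ∨
      Nonempty (Gᶜ ≃g doubleStarT2 (Fintype.card V))) ∨ pc G + pc Gᶜ < Fintype.card V := by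
    rcases main_induction _ Finset.univ hu h5 c1 c2 with ⟨o, a, b, h⟩ | ⟨o, a, b, h⟩ | h
    · exact Or.inl (Or.inl (h.iso h5 rfl))
    · exact Or.inl (Or.inr (h.iso h5 rfl))
    · obtain ⟨k, l, q1, q2, hkl⟩ := h
      have := q1.two_le
      have := q2.two_le
      have := pc_le_of_hasTree (q1.hasTree hne) (by omega)
      have := pc_le_of_hasTree (q2.hasTree hne) (by omega)
      right
      omega
  rcases fwd with h | h
  · have := back h
    exact ⟨by omega, fun _ => h, fun _ => this⟩
  · refine ⟨by omega, fun hh => by omega, back⟩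
end
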